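/- arXiv:2407.17680 — 2 statements merged into one kernel-verified Lean document; each statement's English description precedes it below -/
import Mathlib

section
/- Let a, b be integers with b ≠ 0 and a² − 4b ≠ 0, and let p > 3 be a prime with p ∣ b and p ∤ a. Let d be a nonzero squarefree integer (of either sign) dividing a² − 4b with gcd(d, (a²−4b)/d) = 1. Then the equation z² = d·u⁴ − 2a·u²v² + ((a²−4b)/d)·v⁴ has no solution (z,u,v) ∈ ℚ_p³ with (u,v) ≠ (0,0) if and only if both of the following hold: (i) the Legendre symbol (d/p) = −1, and (ii) ν_p(b) is odd or (a/p) = 1. -/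
/-- The homogeneous space `z² = d·u⁴ − 2a·u²v² + ((a²−4b)/d)·v⁴` has no nontrivial
`ℚ_p`-point. -/
def NoLocalSolution (p : ℕ) [Fact p.Prime] (a b d : ℤ) : Prop :=
  ¬ ∃ z u v : ℚ_[p], (u, v) ≠ (0, 0) ∧
    z ^ 2 = (d : ℚ_[p]) * u ^ 4 - 2 * (a : ℚ_[p]) * u ^ 2 * v ^ 2 +
      (((a ^ 2 - 4 * b) / d : ℤ) : ℚ_[p]) * v ^ 4

/-!
Multiplying the equation by `d` turns it into `N(d·u² − a·v², z) = 4·b·v⁴`, where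
`N(x, y) = x² − d·y²`. If `d` is a square modulo `p`, there is a point with `v = 0`. Otherwise `N`
is the norm form of the unramified quadratic extension: `|N(x, y)| = max(|x|, |y|)²`, and `N`
represents every unit. The norm formula forces `ν_p(b)` to be even and, as `p ∣ b`, forces
`d·u² ≡ a·v²` modulo `p` for a point with `v = 1`, so that `a` is not a square modulo `p`.
Conversely, if `b = β·p²ᵏ` and `N(w, y) = 4·β`, then a solution `u` of `d·u² = a + pᵏ·w` gives the
point `(pᵏ·y, u, 1)`.
-/

section FiniteField

variable {F : Type*} [Field F] [Finite F]

theorem isSquare_mul_iff_of_finite {a b : F} (ha : a ≠ 0) (hb : b ≠ 0) :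
    IsSquare (a * b) ↔ (IsSquare a ↔ IsSquare b) := by
  classical
  have := Fintype.ofFinite F
  rw [← quadraticChar_one_iff_isSquare (mul_ne_zero ha hb), map_mul,
    ← quadraticChar_one_iff_isSquare ha, ← quadraticChar_one_iff_isSquare hb]
  rcases quadraticChar_dichotomy ha with h | h <;>
    rcases quadraticChar_dichotomy hb with h' | h' <;> simp [h, h']

open Polynomial in
theorem exists_mul_sq_add_mul_sq_eq_of_finite (hF : ringChar F ≠ 2) {a b : F} (ha : a ≠ 0)
    (hb : b ≠ 0) (c : F) : ∃ x y : F, a * x ^ 2 + b * y ^ 2 = c := by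
  have := Fintype.ofFinite F
  obtain ⟨x, y, h⟩ := FiniteField.exists_root_sum_quadratic
    (f := C a * X ^ 2) (g := C b * X ^ 2 - C c) (degree_C_mul_X_pow 2 ha)
    (by compute_degree!) (FiniteField.odd_card_of_char_ne_two hF)
  simp only [eval_mul, eval_sub, eval_C, eval_pow, eval_X] at h
  exact ⟨x, y, by linear_combination h⟩

end FiniteField

section Henselian

variable {R K : Type*} [CommRing R] [HenselianLocalRing R] [Field K] {φ : R →+* K}

open Polynomial in
theorem isSquare_of_isSquare_map (hφ : Function.Surjective φ) (hK : ringChar K ≠ 2) {x : R}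
    (hx : φ x ≠ 0) (h : IsSquare (φ x)) : IsSquare x := by
  obtain ⟨y, hy⟩ := h
  obtain ⟨t, rfl⟩ := hφ y
  have ht : φ t ≠ 0 := by simpa [hy] using hx
  have hroot : (X ^ 2 - C x).eval t ∈ IsLocalRing.maximalIdeal R := by
    rw [← IsLocalRing.ker_eq_maximalIdeal φ hφ, RingHom.mem_ker]
    simp [hy, sq]
  have hsimple : IsUnit ((X ^ 2 - C x).derivative.eval t) := by
    have := IsLocalHom.of_surjective φ hφ
    refine isUnit_of_map_unit φ _ (isUnit_iff_ne_zero.2 ?_)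
    have h2t : φ 2 * φ t ≠ 0 := mul_ne_zero (map_ofNat φ 2 ▸ Ring.two_ne_zero hK) ht
    simpa [one_add_one_eq_two] using h2t
  obtain ⟨s, hs, -⟩ := HenselianLocalRing.is_henselian _
    (monic_X_pow_sub_C x two_ne_zero) t hroot hsimple
  exact ⟨s, by simpa [sub_eq_zero, sq, eq_comm] using hs⟩

theorem exists_mul_sq_eq_of_isSquare_map (hφ : Function.Surjective φ) (hK : ringChar K ≠ 2)
    {a b : R} (ha : φ a ≠ 0) (hb : φ b ≠ 0) (h : IsSquare (φ a * φ b)) :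
    ∃ x : R, a * x ^ 2 = b := by
  rw [← map_mul] at h
  obtain ⟨s, hs⟩ := isSquare_of_isSquare_map hφ hK (by simp [ha, hb]) h
  have := IsLocalHom.of_surjective φ hφ
  obtain ⟨a', ha'⟩ := (isUnit_of_map_unit φ a (isUnit_iff_ne_zero.2 ha)).exists_right_inv
  exact ⟨a' * s, by linear_combination -(a * a' ^ 2) * hs + b * (a * a' + 1) * ha'⟩

theorem exists_mul_sq_add_mul_sq_eq [Finite K] (hφ : Function.Surjective φ)
    (hK : ringChar K ≠ 2) {a b c : R} (ha : φ a ≠ 0) (hb : φ b ≠ 0) (hc : φ c ≠ 0) :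
    ∃ x y : R, a * x ^ 2 + b * y ^ 2 = c := by
  obtain ⟨x, y, h⟩ := exists_mul_sq_add_mul_sq_eq_of_finite hK ha hb (φ c)
  obtain ⟨x, rfl⟩ := hφ x
  obtain ⟨y, rfl⟩ := hφ y
  by_cases hx : φ x = 0
  · have hy : φ y ≠ 0 := fun hy => hc (by simp [← h, hx, hy])
    have hres : φ (c - a * x ^ 2) = φ b * φ y ^ 2 := by simp [← h]
    obtain ⟨y', hy'⟩ := exists_mul_sq_eq_of_isSquare_map hφ hK hb (b := c - a * x ^ 2)
      (by simp [hres, hb, hy]) ⟨φ b * φ y, by rw [hres]; ring⟩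
    exact ⟨x, y', by rw [hy']; ring⟩
  · have hres : φ (c - b * y ^ 2) = φ a * φ x ^ 2 := by simp [← h]
    obtain ⟨x', hx'⟩ := exists_mul_sq_eq_of_isSquare_map hφ hK ha (b := c - b * y ^ 2)
      (by simp [hres, ha, hx]) ⟨φ a * φ x, by rw [hres]; ring⟩
    exact ⟨x', y, by rw [hx']; ring⟩

end Henselian

theorem quartic_eq_iff_norm_form_eq {R : Type*} [CommRing R] [IsDomain R] {a b d e : R} (hd : d ≠ 0)
    (hdisc : a ^ 2 - 4 * b = d * e) (z u v : R) :
    z ^ 2 = d * u ^ 4 - 2 * a * u ^ 2 * v ^ 2 + e * v ^ 4 ↔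
      (d * u ^ 2 - a * v ^ 2) ^ 2 - d * z ^ 2 = 4 * b * v ^ 4 := by
  rw [← mul_right_inj' hd]
  constructor <;> intro h <;> linear_combination v ^ 4 * hdisc - h

section Padic

open PadicInt

variable {p : ℕ} [Fact p.Prime]

instance : HenselianLocalRing ℤ_[p] where
  is_henselian f hf t ht hf' :=
    HenselianRing.is_henselian f hf t ht (hf'.map _)

@[simp, norm_cast]
theorem padicInt_coe_ofNat (n : ℕ) [n.AtLeastTwo] :
    ((ofNat(n) : ℤ_[p]) : ℚ_[p]) = ofNat(n) :=
  map_ofNat Coe.ringHom n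

theorem toZMod_eq_zero_iff_norm_lt_one {x : ℤ_[p]} : toZMod x = 0 ↔ ‖x‖ < 1 := by
  rw [← RingHom.mem_ker, ker_toZMod, IsLocalRing.mem_maximalIdeal, mem_nonunits]

theorem toZMod_ne_zero_iff_norm_eq_one {x : ℤ_[p]} : toZMod x ≠ 0 ↔ ‖x‖ = 1 := by
  rw [Ne, toZMod_eq_zero_iff_norm_lt_one, not_lt, (norm_le_one x).ge_iff_eq]

theorem even_valuation_of_norm_eq_sq {x y : ℚ_[p]} (h : ‖x‖ = ‖y‖ ^ 2) :
    Even x.valuation := by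
  have hp := (Fact.out : p.Prime)
  rcases eq_or_ne x 0 with rfl | hx
  · simp
  have hy : y ^ 2 ≠ 0 := by
    rw [← norm_ne_zero_iff, norm_pow, ← h]
    exact norm_ne_zero_iff.2 hx
  rw [← norm_pow, Padic.norm_eq_zpow_neg_valuation hx, Padic.norm_eq_zpow_neg_valuation hy,
    zpow_right_inj₀ (mod_cast hp.pos) (mod_cast hp.one_lt.ne'), neg_inj, Padic.valuation_pow] at h
  rw [h]
  exact even_two.mul_right _

theorem norm_sq_sub_mul_sq {d : ℤ_[p]} (hd : ¬ IsSquare (toZMod d)) (x y : ℚ_[p]) :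
    ‖x ^ 2 - d * y ^ 2‖ = max ‖x‖ ‖y‖ ^ 2 := by
  have hd1 : ‖(d : ℚ_[p])‖ = 1 :=
    toZMod_ne_zero_iff_norm_eq_one.1 fun hzero => hd (hzero ▸ IsSquare.zero)
  rcases lt_or_ge ‖y‖ ‖x‖ with hyx | hxy
  · have hlt : ‖-((d : ℚ_[p]) * y ^ 2)‖ < ‖x ^ 2‖ := by
      rw [norm_neg, norm_mul, hd1, one_mul, norm_pow, norm_pow]
      gcongr
    rw [sub_eq_add_neg, Padic.add_eq_max_of_ne hlt.ne', max_eq_left hlt.le, max_eq_left hyx.le,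
      norm_pow]
  · rw [max_eq_right hxy]
    rcases eq_or_ne y 0 with rfl | hy
    · obtain rfl : x = 0 := by simpa using hxy
      simp
    obtain ⟨t, rfl⟩ : ∃ t : ℤ_[p], x = t * y :=
      ⟨⟨x / y, by rw [norm_div]; exact div_le_one_of_le₀ hxy (norm_nonneg y)⟩,
        (div_mul_cancel₀ x hy).symm⟩
    have ht : ‖t ^ 2 - d‖ = 1 := by
      rw [← toZMod_ne_zero_iff_norm_eq_one, map_sub, map_pow, sub_ne_zero]
      exact fun h => hd ⟨toZMod t, by rw [← h, sq]⟩
    calc ‖(t * y : ℚ_[p]) ^ 2 - d * y ^ 2‖ = ‖((t ^ 2 - d : ℤ_[p]) : ℚ_[p]) * y ^ 2‖ := by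
          push_cast; ring_nf
      _ = ‖y‖ ^ 2 := by rw [norm_mul, ← PadicInt.norm_def, ht, one_mul, norm_pow]

theorem isSquare_toZMod_mul_of_norm_lt_one {a d : ℤ_[p]} (hd : toZMod d ≠ 0) {u : ℚ_[p]}
    (h : ‖(d : ℚ_[p]) * u ^ 2 - a‖ < 1) : IsSquare (toZMod d * toZMod a) := by
  have hu : ‖u‖ ≤ 1 := by
    have hdu : ‖(d : ℚ_[p]) * u ^ 2‖ ≤ 1 := by
      have := Padic.nonarchimedean (d * u ^ 2 - a : ℚ_[p]) a
      rw [sub_add_cancel] at this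
      exact this.trans (max_le h.le a.2)
    have hd1 : ‖(d : ℚ_[p])‖ = 1 := toZMod_ne_zero_iff_norm_eq_one.1 hd
    rw [norm_mul, hd1, one_mul, norm_pow] at hdu
    exact (sq_le_one_iff₀ (norm_nonneg u)).1 hdu
  obtain ⟨u, rfl⟩ : ∃ u' : ℤ_[p], (u' : ℚ_[p]) = u := ⟨⟨u, hu⟩, rfl⟩
  have hres : toZMod (d * u ^ 2 - a) = 0 := toZMod_eq_zero_iff_norm_lt_one.2 (mod_cast h)
  simp only [map_sub, map_mul, map_pow, sub_eq_zero] at hres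
  exact ⟨toZMod d * toZMod u, by rw [← hres]; ring⟩

section Quartic

variable {a b d e : ℤ_[p]}

theorem even_valuation_of_norm_form_eq (hd : ¬ IsSquare (toZMod d)) {x z v : ℚ_[p]} (hv : v ≠ 0)
    (h : x ^ 2 - d * z ^ 2 = 4 * b * v ^ 4) : Even b.valuation := by
  obtain ⟨m, hm⟩ : ∃ m : ℚ_[p], ‖m‖ = max ‖x‖ ‖z‖ := by
    rcases max_choice ‖x‖ ‖z‖ with hmax | hmax
    exacts [⟨x, hmax.symm⟩, ⟨z, hmax.symm⟩]
  have hb : ‖(b : ℚ_[p])‖ = ‖m / (2 * v ^ 2)‖ ^ 2 := by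
    have hscale : (b : ℚ_[p]) = (x ^ 2 - d * z ^ 2) / (2 * v ^ 2) ^ 2 := by
      rw [h]; field_simp; ring
    rw [hscale, norm_div, norm_sq_sub_mul_sq hd, norm_div, hm, div_pow, norm_pow (2 * v ^ 2)]
  simpa only [valuation_coe, Int.even_coe_nat] using even_valuation_of_norm_eq_sq hb

theorem isSquare_toZMod_mul_of_norm_form_eq (hd : ¬ IsSquare (toZMod d)) (hb : toZMod b = 0)
    {z u v : ℚ_[p]} (hv : v ≠ 0) (h : (d * u ^ 2 - a * v ^ 2) ^ 2 - d * z ^ 2 = 4 * b * v ^ 4) :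
    IsSquare (toZMod d * toZMod a) := by
  have hd0 : toZMod d ≠ 0 := fun hzero => hd (hzero ▸ IsSquare.zero)
  have haffine : (d * (u / v) ^ 2 - a) ^ 2 - d * (z / v ^ 2) ^ 2 = ((4 * b : ℤ_[p]) : ℚ_[p]) := by
    push_cast
    field_simp
    linear_combination h
  have hlt : max ‖(d : ℚ_[p]) * (u / v) ^ 2 - a‖ ‖z / v ^ 2‖ ^ 2 < 1 := by
    rw [← norm_sq_sub_mul_sq hd, haffine, ← PadicInt.norm_def, ← toZMod_eq_zero_iff_norm_lt_one,
      map_mul, hb, mul_zero]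
  exact isSquare_toZMod_mul_of_norm_lt_one hd0
    ((le_max_left _ _).trans_lt ((sq_lt_one_iff₀ (by positivity)).1 hlt))

theorem exists_norm_form_eq (hp : p ≠ 2) (hb0 : b ≠ 0) (hb : toZMod b = 0)
    (heven : Even b.valuation) (hd : toZMod d ≠ 0) (ha : toZMod a ≠ 0)
    (had : IsSquare (toZMod d * toZMod a)) :
    ∃ z u : ℤ_[p], (d * u ^ 2 - a) ^ 2 - d * z ^ 2 = 4 * b := by
  have hsurj := ZMod.ringHom_surjective (toZMod (p := p))
  have hchar : ringChar (ZMod p) ≠ 2 := by rwa [ZMod.ringChar_zmod_n]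
  obtain ⟨k, hk⟩ := heven
  have hbk : b = unitCoeff hb0 * (p : ℤ_[p]) ^ (k + k) := hk ▸ unitCoeff_spec hb0
  have hk0 : k ≠ 0 := by
    rintro rfl
    rw [hbk, pow_zero, mul_one] at hb
    exact ((unitCoeff hb0).isUnit.map toZMod).ne_zero hb
  have h4 : toZMod (4 * (unitCoeff hb0 : ℤ_[p])) ≠ 0 := by
    rw [map_mul, map_ofNat, show (4 : ZMod p) = 2 * 2 by norm_num]
    have h2 := Ring.two_ne_zero hchar
    exact mul_ne_zero (mul_ne_zero h2 h2) ((unitCoeff hb0).isUnit.map toZMod).ne_zero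
  obtain ⟨w, y, hwy⟩ := exists_mul_sq_add_mul_sq_eq hsurj hchar (a := 1) (b := -d)
    (by simp) (by simpa using hd) h4
  have hres : toZMod (a + (p : ℤ_[p]) ^ k * w) = toZMod a := by simp [hk0]
  obtain ⟨u, hu⟩ := exists_mul_sq_eq_of_isSquare_map hsurj hchar hd (b := a + p ^ k * w)
    (hres ▸ ha) (hres ▸ had)
  refine ⟨p ^ k * y, u, ?_⟩
  rw [hu]
  linear_combination (p : ℤ_[p]) ^ (2 * k) * hwy - 4 * hbk

theorem ne_zero_of_quartic_eq {a e : ℚ_[p]} {d : ℤ_[p]} (hd : ¬ IsSquare (toZMod d))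
    {z u v : ℚ_[p]} (huv : (u, v) ≠ (0, 0))
    (h : z ^ 2 = d * u ^ 4 - 2 * a * u ^ 2 * v ^ 2 + e * v ^ 4) : v ≠ 0 := by
  rintro rfl
  have hzero : z ^ 2 - d * (u ^ 2) ^ 2 = 0 := by rw [h]; ring
  have hmax : max ‖z‖ ‖u ^ 2‖ = 0 := by
    rw [← pow_eq_zero_iff two_ne_zero, ← norm_sq_sub_mul_sq hd, hzero, norm_zero]
  have hu : u = 0 := by
    rw [← pow_eq_zero_iff two_ne_zero, ← norm_le_zero_iff, ← hmax]
    exact le_max_right _ _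
  exact huv (by rw [hu])

theorem exists_quartic_point_iff (hp : p ≠ 2) (hdisc : a ^ 2 - 4 * b = d * e) (hb0 : b ≠ 0)
    (hb : toZMod b = 0) (ha : toZMod a ≠ 0) :
    (∃ z u v : ℚ_[p], (u, v) ≠ (0, 0) ∧
      z ^ 2 = d * u ^ 4 - 2 * a * u ^ 2 * v ^ 2 + e * v ^ 4) ↔
      IsSquare (toZMod d) ∨ (Even b.valuation ∧ ¬ IsSquare (toZMod a)) := by
  have hd : toZMod d ≠ 0 := by
    refine left_ne_zero_of_mul (b := toZMod e) ?_
    rw [← map_mul, ← hdisc]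
    simpa [hb] using ha
  have hd0 : (d : ℚ_[p]) ≠ 0 := coe_ne_zero.2 (ne_zero_of_map hd)
  have hdisc' : (a : ℚ_[p]) ^ 2 - 4 * b = d * e := by
    exact_mod_cast congrArg ((↑) : ℤ_[p] → ℚ_[p]) hdisc
  have hda := isSquare_mul_iff_of_finite hd ha
  constructor
  · rintro ⟨z, u, v, huv, h⟩
    refine or_iff_not_imp_left.2 fun hns => ?_
    have hv := ne_zero_of_quartic_eq hns huv h
    rw [quartic_eq_iff_norm_form_eq hd0 hdisc'] at h
    have had := isSquare_toZMod_mul_of_norm_form_eq hns hb hv h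
    exact ⟨even_valuation_of_norm_form_eq hns hv h, fun ha' => hns ((hda.1 had).2 ha')⟩
  · intro h
    by_cases hsq : IsSquare (toZMod d)
    · obtain ⟨s, hs⟩ := isSquare_of_isSquare_map (ZMod.ringHom_surjective toZMod)
        (by rwa [ZMod.ringChar_zmod_n]) hd hsq
      exact ⟨s, 1, 0, by simp, by simp [hs, sq]⟩
    · obtain ⟨heven, hns⟩ := h.resolve_left hsq
      obtain ⟨z, u, hzu⟩ := exists_norm_form_eq hp hb0 hb heven hd ha (hda.2 (by tauto))
      refine ⟨z, u, 1, by simp, (quartic_eq_iff_norm_form_eq hd0 hdisc' _ _ _).2 ?_⟩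
      simpa using congrArg ((↑) : ℤ_[p] → ℚ_[p]) hzu

end Quartic

end Padic

theorem local_insolubility_criterion_general (a b : ℤ) (hb : b ≠ 0) (p : ℕ) [Fact p.Prime]
    (hp : p ≠ 2) (hpb : (p : ℤ) ∣ b) (hpa : ¬ (p : ℤ) ∣ a) (d : ℤ) (hdd : d ∣ a ^ 2 - 4 * b) :
    NoLocalSolution p a b d ↔
      legendreSym p d = -1 ∧ (Odd (padicValInt p b) ∨ legendreSym p a = 1) := by
  have hdisc : (a : ℤ_[p]) ^ 2 - 4 * b = d * ((a ^ 2 - 4 * b) / d : ℤ) := by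
    exact_mod_cast (Int.mul_ediv_cancel' hdd).symm
  rw [← ZMod.intCast_zmod_eq_zero_iff_dvd] at hpb hpa
  have hpoint := exists_quartic_point_iff hp hdisc (mod_cast hb)
    (by rwa [map_intCast]) (by rwa [map_intCast])
  have hval : PadicInt.valuation (b : ℤ_[p]) = padicValInt p b := by
    simp [PadicInt.valuation]
  simp only [map_intCast, hval, PadicInt.coe_intCast] at hpoint
  rw [NoLocalSolution, hpoint, legendreSym.eq_neg_one_iff, legendreSym.eq_one_iff p hpa,
    ← Nat.not_even_iff_odd]
  tauto

theorem local_insolubility_criterion (a b : ℤ) (hb : b ≠ 0) (hdisc : a ^ 2 - 4 * b ≠ 0)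
    (p : ℕ) [Fact p.Prime] (hp3 : 3 < p) (hpb : (p : ℤ) ∣ b) (hpa : ¬ (p : ℤ) ∣ a)
    (d : ℤ) (hd0 : d ≠ 0) (hdsf : Squarefree d) (hdd : d ∣ a ^ 2 - 4 * b)
    (hgcd : Int.gcd d ((a ^ 2 - 4 * b) / d) = 1) :
    NoLocalSolution p a b d ↔
      legendreSym p d = -1 ∧ (Odd (padicValInt p b) ∨ legendreSym p a = 1) :=
  local_insolubility_criterion_general a b hb p (by omega) hpb hpa d hdd
end

section
/- Let D be a nonzero squarefree integer such that either (i) every prime factor of D is congruent to 5 modulo 12, or (ii) all prime factors of D except exactly one are congruent to 5 modulo 12, and the remaining prime factor is congruent to 3 modulo 4. Then the rank of the elliptic curve E₀^{(D)}: y² = x³ − D³ over ℚ is at most 1. -/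
open TensorProduct

/-- The quadratic twist `y² = x³ − D³` of the elliptic curve `y² = x³ − 1`. -/
noncomputable def E0twist (D : ℤ) : WeierstrassCurve.Affine ℚ :=
  { a₁ := 0, a₂ := 0, a₃ := 0, a₄ := 0, a₆ := -(D : ℚ) ^ 3 }

/-- The Mordell–Weil rank of a Weierstrass curve over `ℚ`: the dimension of the
`ℚ`-vector space `E(ℚ) ⊗_ℤ ℚ`. -/
noncomputable def mwRank (W : WeierstrassCurve.Affine ℚ) : Cardinal :=
  Module.rank ℚ (ℚ ⊗[ℤ] W.Point)

/-!
The curve has the rational two-torsion point `(D, 0)`. With `u = x - D` it reads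
`y² = u (u² + 3 D u + 3 D²)`, and it is two-isogenous to `y² = u (u² - 6 D u - 3 D²)`. On both
curves `u` induces a homomorphism to `ℚˣ / ℚˣ²`. Its kernel is the image of the isogeny from the
other curve, so `2 ^ (r + 2)` is at most the product of the orders of the two images.

The value of `u` modulo squares is a norm from `ℚ(√-3)` on the first curve and from `ℚ(√3)` on the
second. Neither field has an element of norm `-1`, so a class in the image is determined by the
parities of its valuations. These are even at every prime not dividing `3 D` and at every prime
inert in the field. The primes congruent to `5` modulo `12` are inert in both fields, and a prime
congruent to `7` or `11` is inert in one of them. Counting `3` for each curve, at most three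
parities are left over, and `2 ^ (r + 2) ≤ 2 ^ 3`.

Finite generation comes from the same descent, which makes `E(ℚ) / 2 E(ℚ)` finite, and the
approximate parallelogram law for the height of the `x`-coordinate.
-/

section AbelianGroups

variable {G : Type*} [AddCommGroup G]

theorem one_lt_relIndex {H K : AddSubgroup G} [H.FiniteIndex] (h : ¬ K ≤ H) :
    1 < H.relIndex K :=
  Nat.one_lt_iff_ne_zero_and_ne_one.mpr
    ⟨AddSubgroup.FiniteIndex.index_ne_zero, mt AddSubgroup.relIndex_eq_one.mp h⟩

theorem two_mul_pow_finrank_le_index_range_nsmul [AddGroup.FG G] {n : ℕ} (hn : n ≠ 0) {T : G}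
    (hT : IsOfFinAddOrder T) (hTn : T ∉ (nsmulAddMonoidHom (α := G) n).range) :
    2 * n ^ Module.finrank ℤ G ≤ (nsmulAddMonoidHom (α := G) n).range.index := by
  have : Module.Finite ℤ G := Module.Finite.iff_addGroup_fg.mpr inferInstance
  have := AddSubgroup.finiteIndex_range_nsmulAddMonoidHom_of_fg G hn
  set nG := (nsmulAddMonoidHom (α := G) n).range
  let π : G →+ G ⧸ Submodule.torsion ℤ G := (Submodule.torsion ℤ G).mkQ.toAddMonoidHom
  have hπ : Function.Surjective π := Submodule.mkQ_surjective _
  have hπn : nG.map π = (nsmulAddMonoidHom n).range := by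
    rw [AddMonoidHom.map_range, (by ext; simp : π.comp _ = (nsmulAddMonoidHom n).comp π),
      AddMonoidHom.range_comp, AddMonoidHom.range_eq_top.mpr hπ, ← AddMonoidHom.range_eq_map]
  have hindex : (nG ⊔ π.ker).index = n ^ Module.finrank ℤ G := by
    rw [← finrank_quotient_eq_of_le_torsion (le_refl (Submodule.torsion ℤ G)),
      ← AddSubgroup.index_range_nsmul, ← hπn, AddSubgroup.index_map,
      AddMonoidHom.range_eq_top.mpr hπ, AddSubgroup.index_top, mul_one]
  have hTπ : T ∈ π.ker :=
    (Submodule.Quotient.mk_eq_zero _).mpr (Submodule.torsion_int.ge hT)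
  have hrel : 1 < nG.relIndex (nG ⊔ π.ker) :=
    one_lt_relIndex fun h => hTn (h (AddSubgroup.mem_sup_right hTπ))
  calc 2 * n ^ Module.finrank ℤ G
      ≤ nG.relIndex (nG ⊔ π.ker) * (nG ⊔ π.ker).index := by
        rw [hindex]; exact Nat.mul_le_mul_right _ hrel
    _ = nG.index := AddSubgroup.relIndex_mul_index le_sup_left

end AbelianGroups

section Descent

variable {G H A B : Type*} [AddCommGroup G] [AddCommGroup H] [AddCommGroup A] [AddCommGroup B]
  {α : G →+ A} {β : H →+ B} {ψ : H →+ G} {K : AddSubgroup G}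

theorem finiteIndex_of_descent [Finite α.range] [Finite β.range] (hα : α.ker ≤ ψ.range)
    (hβ : β.ker.map ψ ≤ K) : K.FiniteIndex := by
  have : ψ.range.FiniteIndex := AddSubgroup.finiteIndex_of_le hα
  have : (β.ker ⊔ ψ.ker).FiniteIndex := AddSubgroup.finiteIndex_of_le le_sup_left
  have : (β.ker.map ψ).FiniteIndex := ⟨by
    rw [AddSubgroup.index_map]
    exact mul_ne_zero AddSubgroup.FiniteIndex.index_ne_zero AddSubgroup.FiniteIndex.index_ne_zero⟩
  exact AddSubgroup.finiteIndex_of_le hβ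

theorem two_mul_index_le_of_descent [Finite α.range] [Finite β.range] (hα : α.ker ≤ ψ.range)
    (hβ : β.ker.map ψ ≤ K) (hψ : ¬ ψ.ker ≤ β.ker) :
    2 * K.index ≤ Nat.card α.range * Nat.card β.range := by
  have : (β.ker.map ψ).FiniteIndex := finiteIndex_of_descent hα le_rfl
  have hrel : 1 < β.ker.relIndex (β.ker ⊔ ψ.ker) :=
    one_lt_relIndex fun h => hψ (le_sup_right.trans h)
  calc 2 * K.index ≤ 2 * (β.ker.map ψ).index := by
        gcongr
    _ = 2 * (β.ker ⊔ ψ.ker).index * ψ.range.index := by rw [AddSubgroup.index_map, mul_assoc]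
    _ ≤ β.ker.relIndex (β.ker ⊔ ψ.ker) * (β.ker ⊔ ψ.ker).index * α.ker.index := by
        gcongr
        exact hrel
    _ = Nat.card α.range * Nat.card β.range := by
        rw [AddSubgroup.relIndex_mul_index le_sup_left, AddSubgroup.index_ker,
          AddSubgroup.index_ker, mul_comm]

end Descent

open WeierstrassCurve.Affine

section Lines

open Polynomial

variable {K : Type*} [Field K] {W : WeierstrassCurve.Affine K} {l n x₁ x₂ x₃ : K}

/-- The line `y = l x + n` meets `W` in the points with abscissae `x₁`, `x₂`, `x₃`, counted with
multiplicity. -/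
def IsLineSection (W : WeierstrassCurve.Affine K) (l n x₁ x₂ x₃ : K) : Prop :=
  W.addPolynomial 0 n l = -((X - C x₁) * (X - C x₂) * (X - C x₃))

theorem isLineSection_iff : IsLineSection W l n x₁ x₂ x₃ ↔
    x₁ + x₂ + x₃ = l ^ 2 + W.a₁ * l - W.a₂ ∧
    x₁ * x₂ + x₁ * x₃ + x₂ * x₃ = W.a₄ - 2 * l * n - W.a₁ * n - W.a₃ * l ∧
    x₁ * x₂ * x₃ = n ^ 2 + W.a₃ * n - W.a₆ := by
  rw [IsLineSection, addPolynomial_eq, neg_inj, Cubic.prod_X_sub_C_eq,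
    Cubic.toPoly_injective, Cubic.mk.injEq]
  refine ⟨fun ⟨_, h₂, h₁, h₀⟩ => ⟨?_, ?_, ?_⟩, fun ⟨h₂, h₁, h₀⟩ => ⟨rfl, ?_, ?_, ?_⟩⟩
  · linear_combination h₂
  · linear_combination -h₁
  · linear_combination h₀
  · linear_combination h₂
  · linear_combination -h₁
  · linear_combination h₀

theorem IsLineSection.rotate (h : IsLineSection W l n x₁ x₂ x₃) :
    IsLineSection W l n x₂ x₃ x₁ := by
  rw [IsLineSection, h]; ring

variable [DecidableEq K]

theorem IsLineSection.slope_eq (h : IsLineSection W l n x₁ x₂ x₃)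
    (h₁ : W.Nonsingular x₁ (l * x₁ + n)) :
    ¬(x₁ = x₂ ∧ l * x₁ + n = W.negY x₂ (l * x₂ + n)) ∧
      W.slope x₁ x₂ (l * x₁ + n) (l * x₂ + n) = l := by
  rcases eq_or_ne x₁ x₂ with rfl | hx
  · obtain ⟨e₂, e₁, -⟩ := isLineSection_iff.mp h
    have tangent : 3 * x₁ ^ 2 + 2 * W.a₂ * x₁ + W.a₄ - W.a₁ * (l * x₁ + n) =
        l * (2 * (l * x₁ + n) + W.a₁ * x₁ + W.a₃) := by
      linear_combination 2 * x₁ * e₂ - e₁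
    have hy : 2 * (l * x₁ + n) + W.a₁ * x₁ + W.a₃ ≠ 0 := fun hy => by
      rcases ((W.nonsingular_iff' _ _).mp h₁).2 with hX | hY
      · exact hX (by linear_combination -tangent - l * hy)
      · exact hY hy
    have hneg : l * x₁ + n - W.negY x₁ (l * x₁ + n) =
        2 * (l * x₁ + n) + W.a₁ * x₁ + W.a₃ := by
      rw [negY]; ring
    have hne : l * x₁ + n ≠ W.negY x₁ (l * x₁ + n) := sub_ne_zero.mp (hneg ▸ hy)
    refine ⟨fun ⟨_, h⟩ => hne h, ?_⟩
    rw [slope_of_Y_ne rfl hne, hneg, tangent, mul_div_cancel_right₀ _ hy]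
  · refine ⟨fun ⟨h, _⟩ => hx h, ?_⟩
    rw [slope_of_X_ne hx, div_eq_iff (sub_ne_zero.mpr hx)]
    ring

theorem IsLineSection.sum_eq_zero (h : IsLineSection W l n x₁ x₂ x₃) {y₁ y₂ y₃ : K}
    (h₁ : W.Nonsingular x₁ y₁) (h₂ : W.Nonsingular x₂ y₂) (h₃ : W.Nonsingular x₃ y₃)
    (e₁ : y₁ = l * x₁ + n) (e₂ : y₂ = l * x₂ + n) (e₃ : y₃ = l * x₃ + n) :
    Point.some _ _ h₁ + Point.some _ _ h₂ + Point.some _ _ h₃ = 0 := by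
  subst e₁ e₂ e₃
  obtain ⟨hxy, hslope⟩ := h.slope_eq h₁
  have hx : W.addX x₁ x₂ l = x₃ := by
    rw [addX]
    linear_combination -(isLineSection_iff.mp h).1
  have hy : W.negAddY x₁ x₂ (l * x₁ + n) l = l * x₃ + n := by
    rw [negAddY, hx]; ring
  rw [add_eq_zero_iff_eq_neg, Point.add_some hxy, Point.neg_some, Point.some.injEq,
    addY, hslope, hx, hy]
  exact ⟨rfl, rfl⟩

theorem exists_isLineSection {y₁ y₂ y₃ : K} {h₁ : W.Nonsingular x₁ y₁}
    {h₂ : W.Nonsingular x₂ y₂} {h₃ : W.Nonsingular x₃ y₃}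
    (h : Point.some _ _ h₁ + Point.some _ _ h₂ + Point.some _ _ h₃ = 0) :
    ∃ l n, y₁ = l * x₁ + n ∧ y₂ = l * x₂ + n ∧ y₃ = l * x₃ + n ∧
      IsLineSection W l n x₁ x₂ x₃ := by
  have hxy : ¬(x₁ = x₂ ∧ y₁ = W.negY x₂ y₂) := fun ⟨hx, hy⟩ => by
    rw [Point.add_of_Y_eq hx hy, zero_add] at h
    exact Point.some_ne_zero _ h
  rw [add_comm, add_eq_zero_iff_eq_neg, Point.add_some hxy, Point.neg_some,
    Point.some.injEq, addY, negY_negY] at h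
  obtain ⟨rfl, rfl⟩ := h
  refine ⟨W.slope x₁ x₂ y₁ y₂, y₁ - W.slope x₁ x₂ y₁ y₂ * x₁, by ring, ?_, ?_, ?_⟩
  · rcases eq_or_ne x₁ x₂ with rfl | hx
    · rw [Y_eq_of_Y_ne h₁.1 h₂.1 rfl fun hy => hxy ⟨rfl, hy⟩]; ring
    · rw [slope_of_X_ne hx]
      field_simp [sub_ne_zero.mpr hx]
      ring
  · rw [negAddY]; ring
  · rw [IsLineSection, ← addPolynomial_slope h₁.1 h₂.1 hxy,
      addPolynomial, addPolynomial]
    congr 1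
    simp only [linePolynomial, C_sub, C_mul, C_0]
    ring

/-- A group homomorphism out of `W(K)`, constructed from an odd function which is additive on
collinear triples of affine points. -/
def homOfLine {A : Type*} [AddCommGroup A] (f : W.Point → A) (zero : f 0 = 0)
    (neg : ∀ P, f (-P) = -f P)
    (line : ∀ {l n x₁ x₂ x₃ : K}, IsLineSection W l n x₁ x₂ x₃ →
      ∀ (h₁ : W.Nonsingular x₁ (l * x₁ + n)) (h₂ : W.Nonsingular x₂ (l * x₂ + n))
        (h₃ : W.Nonsingular x₃ (l * x₃ + n)),
        f (.some _ _ h₁) + f (.some _ _ h₂) + f (.some _ _ h₃) = 0) :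
    W.Point →+ A where
  toFun := f
  map_zero' := zero
  map_add' P Q := by
    have sum_zero : ∀ P Q R : W.Point, P + Q + R = 0 → f P + f Q + f R = 0 := by
      rintro (_ | ⟨x₁, y₁, h₁⟩) (_ | ⟨x₂, y₂, h₂⟩) (_ | ⟨x₃, y₃, h₃⟩) h
      case some.some.some =>
        obtain ⟨l, n, rfl, rfl, rfl, hl⟩ := exists_isLineSection h
        exact line hl h₁ h₂ h₃
      all_goals
        simp only [← Point.zero_def, add_zero, zero_add, zero, add_eq_zero_iff_eq_neg] at h ⊢
          <;> simp only [h, neg, zero]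
    have := sum_zero P Q (-(P + Q)) (add_neg_cancel _)
    rw [neg, add_neg_eq_zero] at this
    exact this.symm

end Lines

section SquareClasses

variable {K : Type*} [Field K]

/-- The group `Kˣ / Kˣ²` of square classes of `K`, written additively. -/
def SquareClass (K : Type*) [Field K] : Type _ :=
  Additive (Kˣ ⧸ (powMonoidHom 2 : Kˣ →* Kˣ).range)

instance : AddCommGroup (SquareClass K) :=
  inferInstanceAs (AddCommGroup (Additive (Kˣ ⧸ (powMonoidHom 2 : Kˣ →* Kˣ).range)))

/-- The square class of a unit. -/
def squareClass (u : Kˣ) : SquareClass K := Additive.ofMul (QuotientGroup.mk u)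

theorem squareClass_mul (u v : Kˣ) : squareClass (u * v) = squareClass u + squareClass v := rfl

theorem squareClass_eq_zero {u : Kˣ} : squareClass u = 0 ↔ IsSquare (u : K) := by
  refine (QuotientGroup.eq_one_iff u).trans ⟨?_, ?_⟩
  · rintro ⟨v, rfl⟩
    exact ⟨v, by simp [sq]⟩
  · rintro ⟨c, hc⟩
    have hc0 : c ≠ 0 := by rintro rfl; simp at hc
    exact ⟨Units.mk0 c hc0, Units.ext (by simp [hc, sq])⟩

theorem SquareClass.neg_eq (s : SquareClass K) : -s = s := by
  obtain ⟨u, rfl⟩ : ∃ u, squareClass u = s := QuotientGroup.mk_surjective s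
  rw [neg_eq_iff_add_eq_zero, ← squareClass_mul, squareClass_eq_zero]
  exact ⟨u, by simp⟩

end SquareClasses

section TwoTorsionModel

variable {K : Type*} [Field K] {e a b : K}

/-- The curve `y² = (x - e) ((x - e)² + a (x - e) + b)`, the general Weierstrass curve with
`a₁ = a₃ = 0` and a rational point `(e, 0)` of order two. -/
def twoTorsionModel (e a b : K) : WeierstrassCurve.Affine K where
  a₁ := 0
  a₂ := a - 3 * e
  a₃ := 0
  a₄ := 3 * e ^ 2 - 2 * a * e + b
  a₆ := -e ^ 3 + a * e ^ 2 - b * e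

namespace twoTorsionModel

theorem equation_iff {x y : K} : (twoTorsionModel e a b).Equation x y ↔
    y ^ 2 = (x - e) * ((x - e) ^ 2 + a * (x - e) + b) := by
  rw [WeierstrassCurve.Affine.equation_iff]
  simp only [twoTorsionModel]
  constructor <;> intro h <;> linear_combination h

theorem negY_eq (x y : K) : (twoTorsionModel e a b).negY x y = -y := by
  simp [negY, twoTorsionModel]

theorem isLineSection_iff {l n x₁ x₂ x₃ : K} :
    IsLineSection (twoTorsionModel e a b) l n x₁ x₂ x₃ ↔
      (x₁ - e) + (x₂ - e) + (x₃ - e) = l ^ 2 - a ∧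
      (x₁ - e) * (x₂ - e) + (x₁ - e) * (x₃ - e) + (x₂ - e) * (x₃ - e) =
        b - 2 * l * (l * e + n) ∧
      (x₁ - e) * (x₂ - e) * (x₃ - e) = (l * e + n) ^ 2 := by
  rw [_root_.isLineSection_iff]
  simp only [twoTorsionModel]
  constructor
  · rintro ⟨h₂, h₁, h₀⟩
    refine ⟨?_, ?_, ?_⟩
    · linear_combination h₂
    · linear_combination h₁ - 2 * e * h₂
    · linear_combination h₀ - e * h₁ + e ^ 2 * h₂
  · rintro ⟨h₂, h₁, h₀⟩
    refine ⟨?_, ?_, ?_⟩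
    · linear_combination h₂
    · linear_combination h₁ + 2 * e * h₂
    · linear_combination h₀ + e * h₁ + e ^ 2 * h₂

theorem Δ_eq : (twoTorsionModel e a b).Δ = 16 * b ^ 2 * (a ^ 2 - 4 * b) := by
  simp only [twoTorsionModel, WeierstrassCurve.Δ, WeierstrassCurve.b₂, WeierstrassCurve.b₄,
    WeierstrassCurve.b₆, WeierstrassCurve.b₈]
  ring

theorem isElliptic_iff : (twoTorsionModel e a b).IsElliptic ↔
    (2 : K) ≠ 0 ∧ b ≠ 0 ∧ a ^ 2 - 4 * b ≠ 0 := by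
  rw [WeierstrassCurve.isElliptic_iff, isUnit_iff_ne_zero, Δ_eq,
    (by norm_num : (16 : K) = 2 ^ 4)]
  simp [and_assoc]

section DescentValue

variable [DecidableEq K]

/-- The value at `P` of the function `x - e` defining the connecting homomorphism of the descent
via two-isogeny. At `(e, 0)` it is replaced by `b`, the value of `y² / (x - e)` there. -/
def descentValue : (twoTorsionModel e a b).Point → K
  | .zero => 1
  | .some x _ _ => if x = e then b else x - e

@[simp]
theorem descentValue_zero : descentValue (0 : (twoTorsionModel e a b).Point) = 1 := rfl

theorem descentValue_some {x y : K} (h : (twoTorsionModel e a b).Nonsingular x y) :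
    descentValue (.some x y h) = if x = e then b else x - e := rfl

theorem descentValue_neg (P : (twoTorsionModel e a b).Point) :
    descentValue (-P) = descentValue P := by
  cases P <;> rfl

end DescentValue

variable [hE : (twoTorsionModel e a b).IsElliptic]

instance dual_isElliptic : (twoTorsionModel e (-2 * a) (a ^ 2 - 4 * b)).IsElliptic := by
  obtain ⟨h2, hb, hb'⟩ := isElliptic_iff.mp hE
  refine isElliptic_iff.mpr ⟨h2, hb', ?_⟩
  rw [(by ring : (-2 * a) ^ 2 - 4 * (a ^ 2 - 4 * b) = 2 ^ 4 * b)]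
  exact mul_ne_zero (pow_ne_zero 4 h2) hb

/-- The affine point with the given coordinates. -/
def mk (x y : K) (h : y ^ 2 = (x - e) * ((x - e) ^ 2 + a * (x - e) + b)) :
    (twoTorsionModel e a b).Point :=
  .some x y (equation_iff_nonsingular.mp (equation_iff.mpr h))

/-- The point `(e, 0)` of order two. -/
def torsionPoint : (twoTorsionModel e a b).Point := mk e 0 (by ring)

variable [DecidableEq K]

theorem two_nsmul_torsionPoint : 2 • (torsionPoint : (twoTorsionModel e a b).Point) = 0 := by
  rw [two_nsmul]
  exact Point.add_self_of_Y_eq (by rw [negY_eq, neg_zero])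

theorem descentValue_torsionPoint :
    descentValue (torsionPoint : (twoTorsionModel e a b).Point) = b := if_pos rfl

theorem descentValue_ne_zero (P : (twoTorsionModel e a b).Point) : descentValue P ≠ 0 := by
  obtain _ | ⟨x, y, h⟩ := P
  · exact one_ne_zero
  · rw [descentValue_some]
    split_ifs with hx
    · exact (isElliptic_iff.mp hE).2.1
    · exact sub_ne_zero.mpr hx

theorem isSquare_descentValue_mul_of_fst_eq {l n x₂ x₃ : K}
    (h : IsLineSection (twoTorsionModel e a b) l n e x₂ x₃)
    (h₁ : (twoTorsionModel e a b).Nonsingular e (l * e + n))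
    (h₂ : (twoTorsionModel e a b).Nonsingular x₂ (l * x₂ + n))
    (h₃ : (twoTorsionModel e a b).Nonsingular x₃ (l * x₃ + n)) :
    IsSquare (descentValue (.some _ _ h₁) * descentValue (.some _ _ h₂) *
      descentValue (.some _ _ h₃)) := by
  have hb := (isElliptic_iff.mp hE).2.1
  obtain ⟨-, e₁, e₀⟩ := isLineSection_iff.mp h
  have hm : l * e + n = 0 := by simpa using e₀.symm
  have hprod : (x₂ - e) * (x₃ - e) = b := by simpa [hm] using e₁
  have hx₂ : x₂ ≠ e := by rintro rfl; simp [← hprod] at hb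
  have hx₃ : x₃ ≠ e := by rintro rfl; simp [← hprod] at hb
  refine ⟨b, ?_⟩
  rw [descentValue_some, descentValue_some, descentValue_some, if_pos rfl, if_neg hx₂, if_neg hx₃,
    mul_assoc, hprod]

theorem isSquare_descentValue_mul {l n x₁ x₂ x₃ : K}
    (h : IsLineSection (twoTorsionModel e a b) l n x₁ x₂ x₃)
    (h₁ : (twoTorsionModel e a b).Nonsingular x₁ (l * x₁ + n))
    (h₂ : (twoTorsionModel e a b).Nonsingular x₂ (l * x₂ + n))
    (h₃ : (twoTorsionModel e a b).Nonsingular x₃ (l * x₃ + n)) :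
    IsSquare (descentValue (.some _ _ h₁) * descentValue (.some _ _ h₂) *
      descentValue (.some _ _ h₃)) := by
  rcases eq_or_ne x₁ e with rfl | hx₁
  · exact isSquare_descentValue_mul_of_fst_eq h h₁ h₂ h₃
  rcases eq_or_ne x₂ e with rfl | hx₂
  · rw [mul_rotate]
    exact isSquare_descentValue_mul_of_fst_eq h.rotate h₂ h₃ h₁
  rcases eq_or_ne x₃ e with rfl | hx₃
  · rw [← mul_rotate]
    exact isSquare_descentValue_mul_of_fst_eq h.rotate.rotate h₃ h₁ h₂
  refine ⟨l * e + n, ?_⟩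
  rw [descentValue_some, descentValue_some, descentValue_some, if_neg hx₁, if_neg hx₂, if_neg hx₃,
    (isLineSection_iff.mp h).2.2, sq]

/-- The connecting homomorphism `E(K) → Kˣ / Kˣ²` of the descent via two-isogeny. -/
def descentMap : (twoTorsionModel e a b).Point →+ SquareClass K :=
  homOfLine (W := twoTorsionModel e a b)
    (fun P => squareClass (Units.mk0 _ (descentValue_ne_zero P)))
    (squareClass_eq_zero.mpr (by simp))
    (fun P => by simp only [SquareClass.neg_eq, descentValue_neg])
    (fun h h₁ h₂ h₃ => by
      rw [← squareClass_mul, ← squareClass_mul, squareClass_eq_zero]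
      exact isSquare_descentValue_mul h h₁ h₂ h₃)

theorem descentMap_apply (P : (twoTorsionModel e a b).Point) :
    descentMap P = squareClass (Units.mk0 _ (descentValue_ne_zero P)) := rfl

theorem mem_ker_descentMap {P : (twoTorsionModel e a b).Point} :
    P ∈ descentMap.ker ↔ IsSquare (descentValue P) := by
  rw [AddMonoidHom.mem_ker, descentMap_apply, squareClass_eq_zero, Units.val_mk0]

theorem torsionPoint_notMem_range_nsmul (hb : ¬ IsSquare b) :
    (torsionPoint : (twoTorsionModel e a b).Point) ∉ (nsmulAddMonoidHom 2).range := by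
  rintro ⟨P, hP⟩
  have : (torsionPoint : (twoTorsionModel e a b).Point) ∈ descentMap.ker := by
    rw [← hP, AddMonoidHom.mem_ker, nsmulAddMonoidHom_apply, map_nsmul, two_nsmul,
      ← neg_eq_iff_add_eq_zero, SquareClass.neg_eq]
  rw [mem_ker_descentMap, descentValue_torsionPoint] at this
  exact hb this

theorem exists_descentValue_eq_norm (P : (twoTorsionModel e a b).Point) :
    ∃ A B, descentValue P = A ^ 2 - (a ^ 2 - 4 * b) * B ^ 2 := by
  obtain ⟨h2, -, hb'⟩ := isElliptic_iff.mp hE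
  obtain _ | ⟨x, y, h⟩ := P
  · exact ⟨1, 0, by simp [← Point.zero_def]⟩
  rw [descentValue_some]
  split_ifs with hx
  · exact ⟨a / 2, 1 / 2, by field_simp; ring⟩
  have hu : x - e ≠ 0 := sub_ne_zero.mpr hx
  have hy := equation_iff.mp h.1
  set u := x - e
  obtain ⟨N, hN⟩ : ∃ N, N = (u + a / 2) ^ 2 - (a ^ 2 - 4 * b) * (1 / 2) ^ 2 := ⟨_, rfl⟩
  have hNeq : N = u ^ 2 + a * u + b := by rw [hN]; field_simp; ring
  rw [← hNeq] at hy
  by_cases hN0 : N = 0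
  · have hc : a ^ 2 - 4 * b = (2 * u + a) ^ 2 := by linear_combination (-4) * (hNeq.symm.trans hN0)
    have hc0 : 2 * u + a ≠ 0 := by rintro h0; simp [hc, h0] at hb'
    refine ⟨(u + 1) / 2, (u - 1) / 2 / (2 * u + a), ?_⟩
    rw [hc, ← mul_pow, mul_div_cancel₀ _ hc0]
    field_simp
    ring
  · refine ⟨y * (u + a / 2) / N, y * (1 / 2) / N, ?_⟩
    calc u = y ^ 2 * N / N ^ 2 := by rw [hy]; field_simp
      _ = y ^ 2 * ((u + a / 2) ^ 2 - (a ^ 2 - 4 * b) * (1 / 2) ^ 2) / N ^ 2 := by rw [← hN]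
      _ = _ := by ring

end twoTorsionModel
end TwoTorsionModel

section Isogeny

variable {K : Type*} [Field K] {e a b : K}

namespace twoTorsionModel

/-- The reciprocals `wᵢ = (l e + n) / (xᵢ - e)` parametrize the triples of collinear points. -/
theorem exists_param_of_isLineSection {l n x₁ x₂ x₃ : K}
    (h : IsLineSection (twoTorsionModel e a b) l n x₁ x₂ x₃)
    (hx₁ : x₁ ≠ e) (hx₂ : x₂ ≠ e) (hx₃ : x₃ ≠ e) :
    ∃ w₁ w₂ w₃, x₁ = e + w₂ * w₃ ∧ x₂ = e + w₃ * w₁ ∧ x₃ = e + w₁ * w₂ ∧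
      n = w₁ * w₂ * w₃ - l * e ∧ a = l ^ 2 - (w₁ * w₂ + w₂ * w₃ + w₃ * w₁) ∧
      b = (w₁ + w₂ + w₃ + 2 * l) * (w₁ * w₂ * w₃) := by
  obtain ⟨e₂, e₁, e₀⟩ := isLineSection_iff.mp h
  have hu₁ := sub_ne_zero.mpr hx₁
  have hu₂ := sub_ne_zero.mpr hx₂
  have hu₃ := sub_ne_zero.mpr hx₃
  obtain ⟨w₁, hw₁⟩ : ∃ w, (x₁ - e) * w = l * e + n := ⟨_, mul_div_cancel₀ _ hu₁⟩
  obtain ⟨w₂, hw₂⟩ : ∃ w, (x₂ - e) * w = l * e + n := ⟨_, mul_div_cancel₀ _ hu₂⟩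
  obtain ⟨w₃, hw₃⟩ : ∃ w, (x₃ - e) * w = l * e + n := ⟨_, mul_div_cancel₀ _ hu₃⟩
  have h₃ : x₃ - e = w₁ * w₂ := mul_left_cancel₀ (mul_ne_zero hu₁ hu₂) <| by
    linear_combination e₀ - (x₂ - e) * w₂ * hw₁ - (l * e + n) * hw₂
  have h₁ : x₁ - e = w₂ * w₃ := mul_left_cancel₀ (mul_ne_zero hu₂ hu₃) <| by
    linear_combination e₀ - (x₃ - e) * w₃ * hw₂ - (l * e + n) * hw₃
  have h₂ : x₂ - e = w₃ * w₁ := mul_left_cancel₀ (mul_ne_zero hu₃ hu₁) <| by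
    linear_combination e₀ - (x₁ - e) * w₁ * hw₃ - (l * e + n) * hw₁
  rw [h₁] at hw₁ e₁ e₂
  rw [h₂] at e₁ e₂
  rw [h₃] at e₁ e₂
  refine ⟨w₁, w₂, w₃, ?_, ?_, ?_, ?_, ?_, ?_⟩
  · linear_combination h₁
  · linear_combination h₂
  · linear_combination h₃
  · linear_combination -hw₁
  · linear_combination e₂
  · linear_combination -e₁ - 2 * l * hw₁

theorem neg_mk [(twoTorsionModel e a b).IsElliptic] {x y : K} (h)
    (h' : (-y) ^ 2 = (x - e) * ((x - e) ^ 2 + a * (x - e) + b)) :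
    -(mk x y h : (twoTorsionModel e a b).Point) = mk x (-y) h' := by
  simp only [mk, Point.neg_some, negY_eq]

/-- The abscissa of the image of `(x, y)` under `isogeny`. -/
def isogenyX (e x y : K) : K := e + (y / (2 * (x - e))) ^ 2

/-- The ordinate of the image of `(x, y)` under `isogeny`, where `c = a ^ 2 - 4 * b`. -/
def isogenyY (e c x y : K) : K := y / (2 * (x - e)) * (c / (x - e) - (x - e)) / 4

theorem isogenyX_param {u w l : K} (hu : u ≠ 0) :
    isogenyX e (e + u) (u * (l + w)) = e + ((l + w) / 2) ^ 2 := by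
  rw [isogenyX, add_sub_cancel_left, mul_comm 2, mul_div_mul_left _ _ hu]

theorem isogenyX_of_sq {t v : K} (h2 : (2 : K) ≠ 0) (ht : t ≠ 0) :
    isogenyX e (e + t ^ 2) (2 * t ^ 2 * v) = e + v ^ 2 := by
  rw [isogenyX, add_sub_cancel_left, mul_div_cancel_left₀ _ (mul_ne_zero h2 (pow_ne_zero 2 ht))]

theorem isogenyY_param {u w l q : K} (hu : u ≠ 0) :
    isogenyY e (q * (u * w)) (e + u) (u * (l + w)) = (l + w) / 2 * (q * w - u) / 4 := by
  rw [isogenyY, add_sub_cancel_left, mul_comm 2, mul_div_mul_left _ _ hu, mul_left_comm q,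
    mul_div_cancel_left₀ _ hu]

variable [hE : (twoTorsionModel e a b).IsElliptic]

theorem isogeny_equation {x y : K} (hx : x ≠ e)
    (h : (twoTorsionModel e (-2 * a) (a ^ 2 - 4 * b)).Equation x y) :
    isogenyY e (a ^ 2 - 4 * b) x y ^ 2 = (isogenyX e x y - e) *
      ((isogenyX e x y - e) ^ 2 + a * (isogenyX e x y - e) + b) := by
  have h2 : (2 : K) ≠ 0 := (isElliptic_iff.mp hE).1
  have h4 : (4 : K) ≠ 0 := by simpa [(by norm_num : (4 : K) = 2 ^ 2)]
  have hu : x - e ≠ 0 := sub_ne_zero.mpr hx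
  rw [equation_iff] at h
  rw [isogenyX, isogenyY, add_sub_cancel_left]
  generalize x - e = u at *
  have hv : 4 * (y / (2 * u)) ^ 2 = u - 2 * a + (a ^ 2 - 4 * b) / u := by
    rw [div_pow, h]
    field_simp
    ring
  have hw : u * ((a ^ 2 - 4 * b) / u) = a ^ 2 - 4 * b := mul_div_cancel₀ _ hu
  generalize (a ^ 2 - 4 * b) / u = w at *
  generalize y / (2 * u) = v at *
  field_simp
  linear_combination v ^ 2 * (4 * v ^ 2 + 2 * a + u + w) * (-hv) - 4 * v ^ 2 * hw

theorem isogenyY_of_sq {t v : K} (ht : t ≠ 0)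
    (hv : 4 * t ^ 2 * v ^ 2 = t ^ 4 - 2 * a * t ^ 2 + (a ^ 2 - 4 * b)) :
    isogenyY e (a ^ 2 - 4 * b) (e + t ^ 2) (2 * t ^ 2 * v) = v * (v ^ 2 - (t ^ 2 - a) / 2) := by
  have h2 := (isElliptic_iff.mp hE).1
  have h4 : (4 : K) ≠ 0 := by simpa [(by norm_num : (4 : K) = 2 ^ 2)]
  rw [isogenyY, add_sub_cancel_left]
  field_simp
  linear_combination -2 * v * hv

theorem isogeny_isLineSection {l n x₁ x₂ x₃ : K}
    (h : IsLineSection (twoTorsionModel e (-2 * a) (a ^ 2 - 4 * b)) l n x₁ x₂ x₃)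
    (hx₁ : x₁ ≠ e) (hx₂ : x₂ ≠ e) (hx₃ : x₃ ≠ e) :
    ∃ L N, IsLineSection (twoTorsionModel e a b) L N (isogenyX e x₁ (l * x₁ + n))
        (isogenyX e x₂ (l * x₂ + n)) (isogenyX e x₃ (l * x₃ + n)) ∧
      ∀ x ∈ ({x₁, x₂, x₃} : Set K), isogenyY e (a ^ 2 - 4 * b) x (l * x + n) =
        L * isogenyX e x (l * x + n) + N := by
  have h2 := (isElliptic_iff.mp hE).1
  have h4 : (4 : K) ≠ 0 := by simpa [(by norm_num : (4 : K) = 2 ^ 2)]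
  obtain ⟨w₁, w₂, w₃, rfl, rfl, rfl, rfl, ha, hc⟩ := exists_param_of_isLineSection h hx₁ hx₂ hx₃
  have y₁ : l * (e + w₂ * w₃) + (w₁ * w₂ * w₃ - l * e) = w₂ * w₃ * (l + w₁) := by ring
  have y₂ : l * (e + w₃ * w₁) + (w₁ * w₂ * w₃ - l * e) = w₃ * w₁ * (l + w₂) := by ring
  have y₃ : l * (e + w₁ * w₂) + (w₁ * w₂ * w₃ - l * e) = w₁ * w₂ * (l + w₃) := by ring
  have hu₁ : w₂ * w₃ ≠ 0 := by simpa using hx₁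
  have hu₂ : w₃ * w₁ ≠ 0 := by simpa using hx₂
  have hu₃ : w₁ * w₂ ≠ 0 := by simpa using hx₃
  have ha' : a = (l ^ 2 - (w₁ * w₂ + w₂ * w₃ + w₃ * w₁)) / -2 := by rw [← ha]; field_simp
  have hb : b = (a ^ 2 - (w₁ + w₂ + w₃ + 2 * l) * (w₁ * w₂ * w₃)) / 4 := by
    rw [← hc]; field_simp; ring
  let L := (w₁ + w₂ + w₃ + l) / 2
  let s := (l + w₁) / 2 * ((l + w₂) / 2) * ((l + w₃) / 2)
  refine ⟨L, -s - L * e, ?_, ?_⟩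
  · rw [y₁, y₂, y₃, isogenyX_param hu₁, isogenyX_param hu₂, isogenyX_param hu₃, isLineSection_iff,
      hb, ha']
    refine ⟨?_, ?_, ?_⟩ <;> simp only [L, s] <;> field_simp <;> ring
  rintro x (rfl | rfl | rfl)
  on_goal 1 => rw [y₁, isogenyX_param hu₁, hc, (by ring : w₁ * w₂ * w₃ = w₂ * w₃ * w₁),
    isogenyY_param hu₁]
  on_goal 2 => rw [y₂, isogenyX_param hu₂, hc, (by ring : w₁ * w₂ * w₃ = w₃ * w₁ * w₂),
    isogenyY_param hu₂]
  on_goal 3 => rw [y₃, isogenyX_param hu₃, hc, isogenyY_param hu₃]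
  all_goals
    simp only [L, s]
    field_simp
    ring

variable [DecidableEq K]

/-- The map underlying `isogeny`. -/
def isogenyFun : (twoTorsionModel e (-2 * a) (a ^ 2 - 4 * b)).Point → (twoTorsionModel e a b).Point
  | .zero => 0
  | .some _ _ h => if hx : _ = e then 0 else mk _ _ (isogeny_equation hx h.1)

theorem isogenyFun_some_self {y : K}
    (h : (twoTorsionModel e (-2 * a) (a ^ 2 - 4 * b)).Nonsingular e y) :
    isogenyFun (.some e y h) = 0 := dif_pos rfl

theorem isogenyFun_some {x y : K} (hx : x ≠ e)
    (h : (twoTorsionModel e (-2 * a) (a ^ 2 - 4 * b)).Nonsingular x y) :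
    isogenyFun (.some x y h) = mk _ _ (isogeny_equation hx h.1) := dif_neg hx

theorem isogenyFun_neg (P : (twoTorsionModel e (-2 * a) (a ^ 2 - 4 * b)).Point) :
    isogenyFun (-P) = -isogenyFun P := by
  obtain _ | ⟨x, y, h⟩ := P
  · rfl
  rw [Point.neg_some]
  rcases eq_or_ne x e with rfl | hx
  · rw [isogenyFun_some_self, isogenyFun_some_self, neg_zero]
  · rw [isogenyFun_some hx, isogenyFun_some hx, neg_mk _ (by rw [neg_sq, isogeny_equation hx h.1])]
    simp only [mk, negY_eq, isogenyX, isogenyY, neg_div, neg_mul, neg_sq]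

theorem isogenyFun_add_of_fst_eq {l n x₂ x₃ : K}
    (h : IsLineSection (twoTorsionModel e (-2 * a) (a ^ 2 - 4 * b)) l n e x₂ x₃)
    (h₁ : (twoTorsionModel e (-2 * a) (a ^ 2 - 4 * b)).Nonsingular e (l * e + n))
    (h₂ : (twoTorsionModel e (-2 * a) (a ^ 2 - 4 * b)).Nonsingular x₂ (l * x₂ + n))
    (h₃ : (twoTorsionModel e (-2 * a) (a ^ 2 - 4 * b)).Nonsingular x₃ (l * x₃ + n)) :
    isogenyFun (.some _ _ h₁) + isogenyFun (.some _ _ h₂) + isogenyFun (.some _ _ h₃) = 0 := by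
  have hc := (isElliptic_iff.mp hE).2.2
  obtain ⟨-, e₁, e₀⟩ := isLineSection_iff.mp h
  have hm : l * e + n = 0 := by simpa using e₀.symm
  have hprod : (x₂ - e) * (x₃ - e) = a ^ 2 - 4 * b := by simpa [hm] using e₁
  have hx₂ : x₂ - e ≠ 0 := left_ne_zero_of_mul (hprod ▸ hc)
  have hx₃ : x₃ - e ≠ 0 := right_ne_zero_of_mul (hprod ▸ hc)
  have v₂ : (l * x₂ + n) / (2 * (x₂ - e)) = l / 2 := by
    rw [(by linear_combination hm : l * x₂ + n = l * (x₂ - e)), mul_div_mul_right _ _ hx₂]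
  have v₃ : (l * x₃ + n) / (2 * (x₃ - e)) = l / 2 := by
    rw [(by linear_combination hm : l * x₃ + n = l * (x₃ - e)), mul_div_mul_right _ _ hx₃]
  rw [isogenyFun_some_self, zero_add, isogenyFun_some (sub_ne_zero.mp hx₂),
    isogenyFun_some (sub_ne_zero.mp hx₃), ← eq_neg_iff_add_eq_zero,
    neg_mk _ (by rw [neg_sq, isogeny_equation (sub_ne_zero.mp hx₃) h₃.1])]
  simp only [mk, isogenyX, isogenyY, v₂, v₃, ← hprod, mul_div_cancel_left₀ _ hx₂,
    mul_div_cancel_right₀ _ hx₃, Point.some.injEq, true_and]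
  ring

theorem isogenyFun_add {l n x₁ x₂ x₃ : K}
    (h : IsLineSection (twoTorsionModel e (-2 * a) (a ^ 2 - 4 * b)) l n x₁ x₂ x₃)
    (h₁ : (twoTorsionModel e (-2 * a) (a ^ 2 - 4 * b)).Nonsingular x₁ (l * x₁ + n))
    (h₂ : (twoTorsionModel e (-2 * a) (a ^ 2 - 4 * b)).Nonsingular x₂ (l * x₂ + n))
    (h₃ : (twoTorsionModel e (-2 * a) (a ^ 2 - 4 * b)).Nonsingular x₃ (l * x₃ + n)) :
    isogenyFun (.some _ _ h₁) + isogenyFun (.some _ _ h₂) + isogenyFun (.some _ _ h₃) = 0 := by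
  rcases eq_or_ne x₁ e with rfl | hx₁
  · exact isogenyFun_add_of_fst_eq h h₁ h₂ h₃
  rcases eq_or_ne x₂ e with rfl | hx₂
  · rw [add_rotate]
    exact isogenyFun_add_of_fst_eq h.rotate h₂ h₃ h₁
  rcases eq_or_ne x₃ e with rfl | hx₃
  · rw [← add_rotate]
    exact isogenyFun_add_of_fst_eq h.rotate.rotate h₃ h₁ h₂
  obtain ⟨L, N, hL, hY⟩ := isogeny_isLineSection h hx₁ hx₂ hx₃
  rw [isogenyFun_some hx₁, isogenyFun_some hx₂, isogenyFun_some hx₃]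
  exact hL.sum_eq_zero _ _ _ (hY _ (by simp)) (hY _ (by simp)) (hY _ (by simp))

/-- The isogeny of degree two `(x, y) ↦ (e + (y / (2 u))², y (c / u - u) / (8 u))`, with
`u = x - e` and `c = a² - 4 b`, from `y² = u (u² - 2 a u + c)` to `y² = u (u² + a u + b)`. -/
def isogeny :
    (twoTorsionModel e (-2 * a) (a ^ 2 - 4 * b)).Point →+ (twoTorsionModel e a b).Point :=
  homOfLine (W := twoTorsionModel e (-2 * a) (a ^ 2 - 4 * b)) isogenyFun rfl isogenyFun_neg
    isogenyFun_add

theorem isogeny_apply (P : (twoTorsionModel e (-2 * a) (a ^ 2 - 4 * b)).Point) :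
    isogeny P = isogenyFun P := rfl

theorem torsionPoint_mem_range_isogeny (hb : IsSquare b) :
    (torsionPoint : (twoTorsionModel e a b).Point) ∈ isogeny.range := by
  obtain ⟨s, rfl⟩ := hb
  have hU : (a + 2 * s) * (a - 2 * s) = a ^ 2 - 4 * (s * s) := by ring
  have hU0 : e + (a + 2 * s) ≠ e := by
    simpa using left_ne_zero_of_mul (hU ▸ (isElliptic_iff.mp hE).2.2)
  refine ⟨mk (e + (a + 2 * s)) 0 (by ring), ?_⟩
  rw [isogeny_apply, mk, isogenyFun_some hU0]
  simp [mk, torsionPoint, isogenyX, isogenyY]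

theorem ker_descentMap_le_range_isogeny :
    (descentMap : (twoTorsionModel e a b).Point →+ _).ker ≤ isogeny.range := by
  obtain ⟨h2, -, hc⟩ := isElliptic_iff.mp hE
  have h4 : (4 : K) ≠ 0 := by simpa [(by norm_num : (4 : K) = 2 ^ 2)]
  intro P hP
  rw [mem_ker_descentMap] at hP
  obtain _ | ⟨x, y, h⟩ := P
  · exact zero_mem _
  have hy := equation_iff.mp h.1
  rw [descentValue_some] at hP
  split_ifs at hP with hx
  · obtain rfl : y = 0 := by simpa [hx] using hy
    subst hx
    exact torsionPoint_mem_range_isogeny hP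
  obtain ⟨r, hr⟩ := hP
  have hr0 : r ≠ 0 := by rintro rfl; exact hx (by linear_combination hr)
  obtain rfl : x = e + r * r := by linear_combination hr
  rw [add_sub_cancel_left] at hy
  set U := 2 * r ^ 2 + a - 2 * y / r with hUdef
  have hU : U * (2 * r ^ 2 + a + 2 * y / r) = a ^ 2 - 4 * b := by
    rw [hUdef]
    field_simp
    linear_combination (-4) * hy
  have hU0 : U ≠ 0 := left_ne_zero_of_mul (hU ▸ hc)
  refine ⟨mk (e + U) (2 * r * U) ?_, ?_⟩
  · rw [add_sub_cancel_left, ← hU, hUdef]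
    field_simp
    ring
  · rw [isogeny_apply, mk, isogenyFun_some (by simpa using hU0), mk, Point.some.injEq, isogenyX,
      isogenyY, add_sub_cancel_left, ← hU]
    constructor
    · field_simp
    · field_simp
      rw [hUdef]
      field_simp
      ring

theorem isogeny_mem_range_nsmul {x y t : K} (ht : x - e = t ^ 2) (hx : x ≠ e)
    (h : (twoTorsionModel e (-2 * a) (a ^ 2 - 4 * b)).Nonsingular x y) :
    isogeny (.some x y h) ∈ (nsmulAddMonoidHom (α := (twoTorsionModel e a b).Point) 2).range := by
  have h2 := (isElliptic_iff.mp hE).1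
  have ht0 : t ≠ 0 := by rintro rfl; exact hx (by linear_combination ht)
  obtain rfl : x = e + t ^ 2 := by linear_combination ht
  obtain ⟨v, rfl⟩ : ∃ v, y = 2 * t ^ 2 * v := ⟨y / (2 * t ^ 2), by field_simp⟩
  have hv : 4 * t ^ 2 * v ^ 2 = t ^ 4 - 2 * a * t ^ 2 + (a ^ 2 - 4 * b) := by
    have := equation_iff.mp h.1
    rw [add_sub_cancel_left] at this
    refine mul_left_cancel₀ (pow_ne_zero 2 ht0) ?_
    linear_combination this
  obtain ⟨q, hq⟩ : ∃ q, q = (t ^ 2 - a) / 2 - t * v := ⟨_, rfl⟩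
  have h2q : 2 * q = t ^ 2 - a - 2 * t * v := by rw [hq]; field_simp
  have hb : b = q * (q + 2 * t * v) := by
    rw [hq]; field_simp; linear_combination hv
  -- The tangent at `(e + q, t q)` has slope `t - v` and meets the curve again in the negative of
  -- the image of `(x, y)`.
  have hline : IsLineSection (twoTorsionModel e a b) (t - v) (q * v - (t - v) * e)
      (e + q) (e + q) (isogenyX e (e + t ^ 2) (2 * t ^ 2 * v)) := by
    rw [isogenyX_of_sq h2 ht0, isLineSection_iff]
    refine ⟨?_, ?_, ?_⟩
    · linear_combination h2q
    · linear_combination -hb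
    · ring
  have hQ : (t * q) ^ 2 = (e + q - e) * ((e + q - e) ^ 2 + a * (e + q - e) + b) := by
    linear_combination -q * hb - q ^ 2 * h2q
  refine ⟨mk (e + q) (t * q) hQ, ?_⟩
  rw [isogeny_apply, isogenyFun_some hx, nsmulAddMonoidHom_apply, two_nsmul,
    ← add_neg_eq_zero, neg_mk _ (by rw [neg_sq, isogeny_equation hx h.1])]
  refine hline.sum_eq_zero _ _ _ (by ring) (by ring) ?_
  rw [isogenyX_of_sq h2 ht0, isogenyY_of_sq ht0 hv]
  linear_combination -v * hq

theorem map_isogeny_ker_descentMap_le :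
    (descentMap : (twoTorsionModel e (-2 * a) (a ^ 2 - 4 * b)).Point →+ _).ker.map isogeny ≤
      (nsmulAddMonoidHom (α := (twoTorsionModel e a b).Point) 2).range := by
  rintro _ ⟨P, hP, rfl⟩
  rw [SetLike.mem_coe, mem_ker_descentMap] at hP
  obtain _ | ⟨x, y, h⟩ := P
  · exact zero_mem _
  rcases eq_or_ne x e with rfl | hx
  · rw [isogeny_apply, isogenyFun_some_self]
    exact zero_mem _
  rw [descentValue_some, if_neg hx, isSquare_iff_exists_sq] at hP
  obtain ⟨t, ht⟩ := hP
  exact isogeny_mem_range_nsmul ht hx h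

theorem torsionPoint_mem_ker_isogeny : torsionPoint ∈ (isogeny (e := e) (a := a) (b := b)).ker :=
  isogenyFun_some_self (equation_iff_nonsingular.mp (equation_iff.mpr (by ring)))

theorem not_ker_isogeny_le (hc : ¬ IsSquare (a ^ 2 - 4 * b)) :
    ¬ (isogeny (e := e) (a := a) (b := b)).ker ≤ descentMap.ker := fun h => by
  have := h torsionPoint_mem_ker_isogeny
  rw [mem_ker_descentMap, descentValue_torsionPoint] at this
  exact hc this

theorem finiteIndex_range_nsmul_two
    [Finite (descentMap : (twoTorsionModel e a b).Point →+ _).range]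
    [Finite (descentMap : (twoTorsionModel e (-2 * a) (a ^ 2 - 4 * b)).Point →+ _).range] :
    (nsmulAddMonoidHom (α := (twoTorsionModel e a b).Point) 2).range.FiniteIndex :=
  finiteIndex_of_descent ker_descentMap_le_range_isogeny map_isogeny_ker_descentMap_le

theorem four_mul_two_pow_finrank_le [AddGroup.FG (twoTorsionModel e a b).Point]
    [Finite (descentMap : (twoTorsionModel e a b).Point →+ _).range]
    [Finite (descentMap : (twoTorsionModel e (-2 * a) (a ^ 2 - 4 * b)).Point →+ _).range]
    (hb : ¬ IsSquare b) (hc : ¬ IsSquare (a ^ 2 - 4 * b)) :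
    4 * 2 ^ Module.finrank ℤ (twoTorsionModel e a b).Point ≤
      Nat.card (descentMap : (twoTorsionModel e a b).Point →+ _).range *
        Nat.card (descentMap : (twoTorsionModel e (-2 * a) (a ^ 2 - 4 * b)).Point →+ _).range := by
  have hT : IsOfFinAddOrder (torsionPoint : (twoTorsionModel e a b).Point) :=
    isOfFinAddOrder_iff_nsmul_eq_zero.mpr ⟨2, two_pos, two_nsmul_torsionPoint⟩
  calc 4 * 2 ^ Module.finrank ℤ (twoTorsionModel e a b).Point
      = 2 * (2 * 2 ^ Module.finrank ℤ (twoTorsionModel e a b).Point) := by ring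
    _ ≤ 2 * (nsmulAddMonoidHom (α := (twoTorsionModel e a b).Point) 2).range.index :=
        Nat.mul_le_mul_left 2 (two_mul_pow_finrank_le_index_range_nsmul two_ne_zero hT
          (torsionPoint_notMem_range_nsmul hb))
    _ ≤ _ := two_mul_index_le_of_descent ker_descentMap_le_range_isogeny
        map_isogeny_ker_descentMap_le (not_ker_isogeny_le hc)

end twoTorsionModel
end Isogeny

section MordellWeil

open Height

variable {K : Type*} [Field K] {W : WeierstrassCurve.Affine K}

theorem eval_addSubMap (s t u : K) : (fun i => (W.addSubMap i).eval ![s, t, u]) =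
    ![s ^ 2 - W.b₄ * s * u - W.b₆ * t * u - W.b₈ * u ^ 2,
      2 * t * s + W.b₂ * s * u + W.b₄ * t * u + W.b₆ * u ^ 2, t ^ 2 - 4 * s * u] := by
  ext i
  fin_cases i <;> simp [WeierstrassCurve.addSubMap]

theorem exists_abs_logHeight_sym2x_sub_le [AdmissibleAbsValues K]
    (W : WeierstrassCurve.Affine K) : ∃ C : ℝ, ∀ P Q : W.Point,
      |logHeight (P.sym2x Q) - (logHeight P.xRep + logHeight Q.xRep)| ≤ C := by
  obtain ⟨C, hC⟩ := abs_logHeight_sym2_sub_le K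
  have eta (R : W.Point) : ![R.xRep 0, R.xRep 1] = R.xRep := by
    ext i; fin_cases i <;> rfl
  refine ⟨C, fun P Q => ?_⟩
  have := hC (eta P ▸ P.xRep_ne_zero) (eta Q ▸ Q.xRep_ne_zero)
  rwa [eta, eta] at this

theorem eval_addSubMap_sym2x_self_some {x y ψ g : K} (h : W.Nonsingular x y)
    (hψ : ψ = y - W.negY x y) (hg : g = 3 * x ^ 2 + 2 * W.a₂ * x + W.a₄ - W.a₁ * y) :
    (fun i => (W.addSubMap i).eval ((Point.some x y h).sym2x (.some x y h))) =
      ![g ^ 2 + W.a₁ * g * ψ - (W.a₂ + 2 * x) * ψ ^ 2, ψ ^ 2, 0] := by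
  have heq := (equation_iff _ _).mp h.1
  have hden : ψ ^ 2 = 4 * x ^ 3 + W.b₂ * x ^ 2 + 2 * W.b₄ * x + W.b₆ := by
    rw [hψ, negY, WeierstrassCurve.b₂, WeierstrassCurve.b₄, WeierstrassCurve.b₆]
    linear_combination 4 * heq
  have hnum : g ^ 2 + W.a₁ * g * ψ - (W.a₂ + 2 * x) * ψ ^ 2 =
      x ^ 4 - W.b₄ * x ^ 2 - 2 * W.b₆ * x - W.b₈ := by
    rw [hψ, hg, negY, WeierstrassCurve.b₄, WeierstrassCurve.b₆, WeierstrassCurve.b₈]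
    linear_combination -(8 * x + W.a₁ ^ 2 + 4 * W.a₂) * heq
  rw [Point.sym2x_some_some, eval_addSubMap, hnum, hden]
  congr! 1
  · ring
  · congr! 1
    · ring
    · congr! 1
      ring

variable [DecidableEq K]

theorem exists_eval_addSubMap_sym2x_self (P : W.Point) :
    ∃ c : K, c ≠ 0 ∧ (fun i => (W.addSubMap i).eval (P.sym2x P)) = c • (P + P).sym2x 0 := by
  obtain _ | ⟨x, y, h⟩ := P
  · refine ⟨1, one_ne_zero, ?_⟩
    rw [← Point.zero_def, add_zero, Point.sym2x_zero_zero, eval_addSubMap]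
    simp
  obtain ⟨ψ, hψ⟩ : ∃ ψ, ψ = y - W.negY x y := ⟨_, rfl⟩
  obtain ⟨g, hg⟩ : ∃ g, g = 3 * x ^ 2 + 2 * W.a₂ * x + W.a₄ - W.a₁ * y := ⟨_, rfl⟩
  rw [eval_addSubMap_sym2x_self_some h hψ hg]
  by_cases hy : y = W.negY x y
  · have hψ0 : ψ = 0 := by rw [hψ, sub_eq_zero, ← hy]
    have hg0 : g ≠ 0 := fun hg0 => by
      have hy' := sub_eq_zero.mpr hy
      rw [negY] at hy'
      rcases ((W.nonsingular_iff' _ _).mp h).2 with hX | hY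
      · exact hX (by linear_combination hg - hg0)
      · exact hY (by linear_combination hy')
    refine ⟨g ^ 2, pow_ne_zero 2 hg0, ?_⟩
    rw [Point.add_self_of_Y_eq hy, Point.sym2x_zero_zero, hψ0]
    simp
  · have hψ0 : ψ ≠ 0 := hψ ▸ sub_ne_zero.mpr hy
    refine ⟨ψ ^ 2, pow_ne_zero 2 hψ0, ?_⟩
    rw [Point.add_self_of_Y_ne hy, Point.sym2x_some_zero, slope_of_Y_ne rfl hy, ← hψ, ← hg, addX]
    simp only [Matrix.smul_cons, smul_eq_mul, mul_one, mul_zero, Matrix.smul_empty]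
    congr! 1
    field_simp
    ring

theorem eval_addSubMap_sym2x_of_X_ne {x₁ y₁ x₂ y₂ : K} (hx : x₁ ≠ x₂)
    (h₁ : W.Nonsingular x₁ y₁) (h₂ : W.Nonsingular x₂ y₂) :
    (fun i => (W.addSubMap i).eval ((Point.some _ _ h₁).sym2x (.some _ _ h₂))) =
      (x₁ - x₂) ^ 2 •
        (Point.some _ _ h₁ + .some _ _ h₂).sym2x (Point.some _ _ h₁ - .some _ _ h₂) := by
  have hx' : x₁ - x₂ ≠ 0 := sub_ne_zero.mpr hx
  have e₁ := (equation_iff _ _).mp h₁.1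
  have e₂ := (equation_iff _ _).mp h₂.1
  rw [sub_eq_add_neg (Point.some ..), Point.neg_some, Point.add_of_X_ne hx, Point.add_of_X_ne hx,
    Point.sym2x_some_some, Point.sym2x_some_some, eval_addSubMap, slope_of_X_ne hx,
    slope_of_X_ne hx, addX, addX, negY, WeierstrassCurve.b₂, WeierstrassCurve.b₄,
    WeierstrassCurve.b₆, WeierstrassCurve.b₈]
  simp only [Matrix.smul_cons, smul_eq_mul, mul_one, Matrix.smul_empty]
  congr! 1
  · field_simp
    grind
  · congr! 1
    · field_simp
      grind
    · congr! 1
      ring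

theorem exists_eval_addSubMap_sym2x (P Q : W.Point) :
    ∃ c : K, c ≠ 0 ∧
      (fun i => (W.addSubMap i).eval (P.sym2x Q)) = c • (P + Q).sym2x (P - Q) := by
  rcases eq_or_ne P Q with rfl | hne
  · rw [sub_self]
    exact exists_eval_addSubMap_sym2x_self P
  rcases eq_or_ne P (-Q) with rfl | hne'
  · rw [neg_add_cancel, Point.sym2x_neg_left, ← neg_add', Point.sym2x_comm 0, Point.sym2x_neg_left]
    exact exists_eval_addSubMap_sym2x_self Q
  obtain _ | ⟨x₁, y₁, h₁⟩ := P <;> obtain _ | ⟨x₂, y₂, h₂⟩ := Q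
  · exact absurd rfl hne
  · refine ⟨1, one_ne_zero, ?_⟩
    rw [← Point.zero_def, zero_add, zero_sub, Point.sym2x_neg_right, Point.sym2x_zero_some,
      eval_addSubMap, Point.sym2x_some_some]
    ext i
    fin_cases i <;> simp <;> ring
  · refine ⟨1, one_ne_zero, ?_⟩
    rw [← Point.zero_def, add_zero, sub_zero, Point.sym2x_some_zero, eval_addSubMap,
      Point.sym2x_some_some]
    ext i
    fin_cases i <;> simp <;> ring
  · have hx : x₁ ≠ x₂ := fun hx => (Point.X_eq_iff.mp hx).elim hne hne'
    exact ⟨_, pow_ne_zero 2 (sub_ne_zero.mpr hx), eval_addSubMap_sym2x_of_X_ne hx h₁ h₂⟩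

variable [AdmissibleAbsValues K]

theorem exists_abs_parallelogram_logHeight_le (W : WeierstrassCurve.Affine K) [W.IsElliptic] :
    ∃ C : ℝ, ∀ P Q : W.Point, |logHeight (P + Q).xRep + logHeight (P - Q).xRep -
      2 * (logHeight P.xRep + logHeight Q.xRep)| ≤ C := by
  obtain ⟨C₁, hC₁⟩ := W.abs_logHeight_addSubMap_sub_two_mul_logHeight_le
  obtain ⟨C₂, hC₂⟩ := exists_abs_logHeight_sym2x_sub_le W
  refine ⟨C₁ + 3 * C₂, fun P Q => ?_⟩
  obtain ⟨c, hc, hcs⟩ := exists_eval_addSubMap_sym2x P Q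
  have h₁ := abs_le.mp (hC₁ (P.sym2x Q))
  rw [hcs, logHeight_smul_eq_logHeight _ hc] at h₁
  have h₂ := abs_le.mp (hC₂ P Q)
  have h₃ := abs_le.mp (hC₂ (P + Q) (P - Q))
  rw [abs_le]
  constructor <;> linarith

instance northcott_logHeight_xRep [Northcott (logHeight₁ (K := K))] :
    Northcott fun P : W.Point => logHeight P.xRep where
  finite_le B := by
    have hfin : ({![1, 0]} ∪ (fun x : K => ![x, 1]) '' {x | logHeight₁ x ≤ B}).Finite :=
      (Set.finite_singleton _).union ((Northcott.finite_le B).image _)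
    refine Set.Finite.of_finite_fibers (f := Point.xRep) (hfin.subset ?_) ?_
    · rintro _ ⟨_ | ⟨x, y, h⟩, hP, rfl⟩
      · exact .inl rfl
      · rw [Set.mem_ofPred_eq, Point.xRep_some, ← logHeight₁_eq_logHeight] at hP
        exact .inr ⟨x, hP, rfl⟩
    · rintro _ ⟨P, -, rfl⟩
      exact (Set.toFinite {P, -P}).subset fun Q hQ => Point.eq_or_eq_neg_of_xRep_eq_xRep hQ.2

theorem addGroup_fg_of_finiteIndex_range_nsmul_two [W.IsElliptic] [Northcott (logHeight₁ (K := K))]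
    (h : (nsmulAddMonoidHom (α := W.Point) 2).range.FiniteIndex) : AddGroup.FG W.Point := by
  obtain ⟨C, hC⟩ := exists_abs_parallelogram_logHeight_le W
  exact AddCommGroup.fg_of_descent' h (fun P => logHeight_nonneg P.xRep) hC

end MordellWeil

section RationalSquareClasses

theorem isSquare_of_even_padicValNat {n : ℕ} (hn : n ≠ 0)
    (h : ∀ q : ℕ, q.Prime → Even (padicValNat q n)) : IsSquare n := by
  rw [← Nat.prod_factorization_pow_eq_self hn]
  refine Finset.isSquare_prod _ fun q hq => Even.isSquare_pow ?_ _
  have hq' := Nat.prime_of_mem_primeFactors hq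
  rw [Nat.factorization_def n hq']
  exact h q hq'

theorem isSquare_abs_of_even_padicValRat {x : ℚ}
    (h : ∀ q : ℕ, q.Prime → Even (padicValRat q x)) : IsSquare |x| := by
  rcases eq_or_ne x 0 with rfl | hx
  · simp
  have hnum : x.num.natAbs ≠ 0 := by simpa
  obtain ⟨r, hr⟩ : IsSquare (x.num.natAbs * x.den) := by
    refine isSquare_of_even_padicValNat (mul_ne_zero hnum x.den_nz) fun q hq => ?_
    have : Fact q.Prime := ⟨hq⟩
    have := h q hq
    rw [padicValRat_def, padicValInt] at this
    rw [padicValNat.mul hnum x.den_nz]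
    grind
  have hr' : ((x.num.natAbs * x.den : ℕ) : ℚ) = r * r := by rw [hr, Nat.cast_mul]
  have hden : (x.den : ℚ) ≠ 0 := by simp
  refine ⟨r / x.den, ?_⟩
  rw [div_mul_div_comm, ← hr', Nat.cast_mul, mul_div_mul_right _ _ hden, Nat.cast_natAbs,
    Int.cast_abs, ← abs_of_nonneg (x.den.cast_nonneg (α := ℚ)), ← abs_div, Rat.num_div_den]

/-- The parity of the `q`-adic valuation, as a character of the group of rational square
classes. -/
def valuationParity (q : Nat.Primes) : SquareClass ℚ →+ ZMod 2 :=
  have := Fact.mk q.2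
  MonoidHom.toAdditiveLeft <| QuotientGroup.lift (powMonoidHom 2 : ℚˣ →* ℚˣ).range
    { toFun := fun u : ℚˣ => Multiplicative.ofAdd (padicValRat q u : ZMod 2)
      map_one' := by simp
      map_mul' := fun u v => by
        rw [Units.val_mul, padicValRat.mul u.ne_zero v.ne_zero, Int.cast_add, ofAdd_add] } <| by
    rintro _ ⟨u, rfl⟩
    exact ofAdd_eq_one.mpr (ZMod.intCast_eq_zero_iff_even.mpr
      ⟨padicValRat q u, by simp [padicValRat.pow, two_mul]⟩)

theorem valuationParity_squareClass_eq_zero {q : Nat.Primes} {u : ℚˣ} :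
    valuationParity q (squareClass u) = 0 ↔ Even (padicValRat q u) :=
  ZMod.intCast_eq_zero_iff_even

theorem eq_zero_or_eq_neg_one_of_valuationParity_eq_zero {s : SquareClass ℚ}
    (h : ∀ q, valuationParity q s = 0) : s = 0 ∨ s = squareClass (-1) := by
  obtain ⟨u, rfl⟩ : ∃ u, squareClass u = s := QuotientGroup.mk_surjective s
  have hsq : IsSquare |(u : ℚ)| := isSquare_abs_of_even_padicValRat fun q hq =>
    valuationParity_squareClass_eq_zero.mp (h ⟨q, hq⟩)
  rcases abs_choice (u : ℚ) with hu | hu <;> rw [hu] at hsq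
  · exact .inl (squareClass_eq_zero.mpr hsq)
  · right
    rw [← SquareClass.neg_eq (squareClass (-1)), eq_neg_iff_add_eq_zero, ← squareClass_mul,
      squareClass_eq_zero]
    simpa

variable {H : AddSubgroup (SquareClass ℚ)} {S : Finset Nat.Primes}

theorem injective_valuationParity_of_neg_one_notMem (hneg : squareClass (-1) ∉ H)
    (hS : ∀ q ∉ S, ∀ s ∈ H, valuationParity q s = 0) :
    Function.Injective fun (s : H) (q : S) => valuationParity q (s : SquareClass ℚ) := by
  refine fun s t hst => sub_eq_zero.mp (Subtype.ext ?_)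
  have hval (q) : valuationParity q (s - t : H) = 0 := by
    by_cases hq : q ∈ S
    · simpa [sub_eq_zero] using congrFun hst ⟨q, hq⟩
    · exact hS q hq _ (s - t).2
  refine (eq_zero_or_eq_neg_one_of_valuationParity_eq_zero hval).resolve_right fun h => hneg ?_
  rw [← h]
  exact (s - t).2

theorem finite_of_neg_one_notMem (hneg : squareClass (-1) ∉ H)
    (hS : ∀ q ∉ S, ∀ s ∈ H, valuationParity q s = 0) : Finite H :=
  .of_injective _ (injective_valuationParity_of_neg_one_notMem hneg hS)

theorem card_le_two_pow_of_neg_one_notMem (hneg : squareClass (-1) ∉ H)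
    (hS : ∀ q ∉ S, ∀ s ∈ H, valuationParity q s = 0) : Nat.card H ≤ 2 ^ S.card := by
  simpa using
    Nat.card_le_card_of_injective _ (injective_valuationParity_of_neg_one_notMem hneg hS)

end RationalSquareClasses

section ParityOfDescentValues

variable {q : ℕ} [Fact q.Prime]

theorem even_padicValRat_of_padicNorm_eq_sq {x z : ℚ} (hx : x ≠ 0)
    (h : padicNorm q x = padicNorm q z ^ 2) : Even (padicValRat q x) := by
  have hz : z ≠ 0 := by
    rintro rfl
    exact padicNorm.nonzero hx (by simpa using h)
  rw [padicNorm.eq_zpow_of_nonzero hx, padicNorm.eq_zpow_of_nonzero hz, ← zpow_natCast,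
    ← zpow_mul] at h
  have hq : 1 < (q : ℚ) := mod_cast (Fact.out : q.Prime).one_lt
  have := zpow_right_injective₀ (zero_lt_one.trans hq) hq.ne' h
  exact ⟨padicValRat q z, by push_cast at this; linarith⟩

theorem even_padicValRat_norm {n : ℤ} (hn : ¬ IsSquare (n : ZMod q)) (A B : ℚ) :
    Even (padicValRat q (A ^ 2 - n * B ^ 2)) := by
  obtain ⟨r, x, y, hxy, rfl, rfl⟩ :
      ∃ (r : ℚ) (x y : ℤ), IsCoprime x y ∧ A = r * x ∧ B = r * y := by
    rcases eq_or_ne B 0 with rfl | hB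
    · exact ⟨A, 1, 0, isCoprime_one_left, by simp, by simp⟩
    · refine ⟨B / (A / B).den, (A / B).num, (A / B).den, Rat.isCoprime_num_den _, ?_, ?_⟩
      · rw [div_mul_comm, Rat.num_div_den, div_mul_cancel₀ _ hB]
      · simp
  have hval : padicNorm q ((x ^ 2 - n * y ^ 2 : ℤ) : ℚ) = 1 := by
    refine (padicNorm.int_eq_one_iff _).mpr fun hdvd => ?_
    obtain ⟨hx, hy⟩ := legendreSym.prime_dvd_of_eq_neg_one
      ((legendreSym.eq_neg_one_iff q).mpr hn) hdvd
    exact (Nat.prime_iff_prime_int.mp Fact.out).not_isUnit (hxy.isUnit_of_dvd' hx hy)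
  rcases eq_or_ne r 0 with rfl | hr
  · simp
  have hprod : (r * x) ^ 2 - n * (r * y) ^ 2 = r ^ 2 * ((x ^ 2 - n * y ^ 2 : ℤ) : ℚ) := by
    push_cast; ring
  have hne : ((x ^ 2 - n * y ^ 2 : ℤ) : ℚ) ≠ 0 := fun h => by simp [h] at hval
  rw [hprod]
  refine even_padicValRat_of_padicNorm_eq_sq (z := r) (mul_ne_zero (pow_ne_zero 2 hr) hne) ?_
  rw [padicNorm.mul, hval, mul_one, sq, sq, padicNorm.mul]

theorem even_padicValRat_of_sq_eq {a b u y : ℚ} (ha : padicNorm q a ≤ 1) (hb : padicNorm q b = 1)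
    (hu : u ≠ 0) (h : y ^ 2 = u * (u ^ 2 + a * u + b)) : Even (padicValRat q u) := by
  have hnorm : padicNorm q y ^ 2 = padicNorm q u * padicNorm q (u ^ 2 + (a * u + b)) := by
    rw [sq, ← padicNorm.mul, ← sq, h, padicNorm.mul, add_assoc]
  have hu0 : 0 < padicNorm q u := (padicNorm.nonneg u).lt_of_ne' (padicNorm.nonzero hu)
  have hau : padicNorm q (a * u) ≤ padicNorm q u := by
    rw [padicNorm.mul]
    exact mul_le_of_le_one_left hu0.le ha
  have hu2 : padicNorm q (u ^ 2) = padicNorm q u ^ 2 := by rw [sq, sq, padicNorm.mul]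
  rcases lt_trichotomy (padicNorm q u) 1 with hlt | heq | hgt
  · have hau1 : padicNorm q (a * u + b) = 1 := by
      rw [padicNorm.add_eq_max_of_ne (by rw [hb]; exact (hau.trans_lt hlt).ne), hb,
        max_eq_right (hau.trans hlt.le)]
    have hu2' : padicNorm q u ^ 2 < 1 := pow_lt_one₀ hu0.le hlt two_ne_zero
    rw [padicNorm.add_eq_max_of_ne (by rw [hu2, hau1]; exact hu2'.ne), hu2, hau1,
      max_eq_right hu2'.le, mul_one] at hnorm
    exact even_padicValRat_of_padicNorm_eq_sq hu hnorm.symm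
  · exact even_padicValRat_of_padicNorm_eq_sq (z := 1) hu (by simpa using heq)
  · have hlt : padicNorm q (a * u + b) < padicNorm q u ^ 2 :=
      calc padicNorm q (a * u + b) ≤ max (padicNorm q (a * u)) (padicNorm q b) :=
            padicNorm.nonarchimedean
        _ ≤ padicNorm q u := max_le hau (hb.trans_le hgt.le)
        _ < padicNorm q u ^ 2 := lt_self_pow₀ hgt one_lt_two
    rw [padicNorm.add_eq_max_of_ne (by rw [hu2]; exact hlt.ne'), hu2, max_eq_left hlt.le] at hnorm
    refine even_padicValRat_of_padicNorm_eq_sq (z := y / u) hu ?_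
    rw [padicNorm.div, div_pow, hnorm, mul_div_cancel_right₀ _ (pow_ne_zero 2 hu0.ne')]

end ParityOfDescentValues

section RationalDescent

variable {e a b : ℚ} [hE : (twoTorsionModel e a b).IsElliptic]

namespace twoTorsionModel

theorem even_padicValRat_descentValue_of_padicNorm_eq_one {q : ℕ} [Fact q.Prime]
    (ha : padicNorm q a ≤ 1) (hb : padicNorm q b = 1) (P : (twoTorsionModel e a b).Point) :
    Even (padicValRat q (descentValue P)) := by
  have hne := descentValue_ne_zero P
  obtain _ | ⟨x, y, h⟩ := P
  · simp [← Point.zero_def]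
  rw [descentValue_some] at hne ⊢
  split_ifs at hne ⊢ with hx
  · exact even_padicValRat_of_padicNorm_eq_sq (z := 1) hne (by simpa using hb)
  · exact even_padicValRat_of_sq_eq ha hb hne (equation_iff.mp h.1)

theorem even_padicValRat_descentValue_of_not_isSquare {q : ℕ} [Fact q.Prime] {n : ℤ} {c : ℚ}
    (hn : ¬ IsSquare (n : ZMod q)) (hc : a ^ 2 - 4 * b = n * c ^ 2)
    (P : (twoTorsionModel e a b).Point) : Even (padicValRat q (descentValue P)) := by
  obtain ⟨A, B, hP⟩ := exists_descentValue_eq_norm P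
  rw [hP, hc, mul_assoc, ← mul_pow]
  exact even_padicValRat_norm hn A (c * B)

theorem valuationParity_eq_zero_of_mem_range_descentMap {q : Nat.Primes} {A B n : ℤ} {c : ℚ}
    {s : SquareClass ℚ} (hA : a = A) (hB : b = B) (hc : a ^ 2 - 4 * b = n * c ^ 2)
    (hn : (q : ℤ) ∣ B → ¬ IsSquare (n : ZMod q))
    (hs : s ∈ (descentMap : (twoTorsionModel e a b).Point →+ _).range) :
    valuationParity q s = 0 := by
  have := Fact.mk q.2
  obtain ⟨P, rfl⟩ := hs
  refine valuationParity_squareClass_eq_zero.mpr ?_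
  by_cases hq : (q : ℤ) ∣ B
  · exact even_padicValRat_descentValue_of_not_isSquare (hn hq) hc P
  · refine even_padicValRat_descentValue_of_padicNorm_eq_one ?_ ?_ P
    · rw [hA]
      exact padicNorm.of_int A
    · rw [hB]
      exact (padicNorm.int_eq_one_iff B).mpr hq

theorem neg_one_notMem_range_descentMap
    (h : ∀ P : (twoTorsionModel e a b).Point, ¬ IsSquare (-descentValue P)) :
    squareClass (-1) ∉ (descentMap : (twoTorsionModel e a b).Point →+ _).range := by
  rintro ⟨P, hP⟩
  refine h P ?_
  rw [descentMap_apply, ← sub_eq_zero, sub_eq_add_neg, SquareClass.neg_eq, ← squareClass_mul,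
    squareClass_eq_zero] at hP
  simpa using hP

theorem not_isSquare_neg_descentValue_of_neg (h : a ^ 2 - 4 * b < 0)
    (P : (twoTorsionModel e a b).Point) : ¬ IsSquare (-descentValue P) := by
  obtain ⟨A, B, hP⟩ := exists_descentValue_eq_norm P
  intro hsq
  have hle := neg_nonneg.mp hsq.nonneg
  have hge : 0 ≤ descentValue P := by
    rw [hP]
    nlinarith [sq_nonneg A, sq_nonneg B]
  exact descentValue_ne_zero P (le_antisymm hle hge)

theorem not_isSquare_neg_descentValue_of_mod_four_eq_three {p : ℕ} [Fact p.Prime] {c : ℚ}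
    (hp : p % 4 = 3) (hc : a ^ 2 - 4 * b = p * c ^ 2) (P : (twoTorsionModel e a b).Point) :
    ¬ IsSquare (-descentValue P) := by
  obtain ⟨A, B, hP⟩ := exists_descentValue_eq_norm P
  rintro ⟨Z, hZ⟩
  have hZ0 : Z ≠ 0 := by
    rintro rfl
    exact descentValue_ne_zero P (by simpa using hZ)
  have hsum : A ^ 2 - (-1 : ℤ) * Z ^ 2 = p * (c * B) ^ 2 := by
    rw [hP, hc] at hZ
    push_cast
    linear_combination -hZ
  have hns : ¬ IsSquare ((-1 : ℤ) : ZMod p) := by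
    simpa [ZMod.exists_sq_eq_neg_one_iff] using hp
  have heven := even_padicValRat_norm hns A Z
  have hp0 : (p : ℚ) ≠ 0 := mod_cast (Fact.out : p.Prime).ne_zero
  have hcB : c * B ≠ 0 := fun h0 => by
    have hpos : 0 < A ^ 2 + Z ^ 2 := by positivity
    rw [h0] at hsum
    push_cast at hsum
    linarith
  rw [hsum, padicValRat.mul hp0 (pow_ne_zero 2 hcB), padicValRat.pow,
    padicValRat.self (Fact.out : p.Prime).one_lt] at heven
  simp [parity_simps] at heven

variable {S S' : Finset Nat.Primes}
  (hneg : squareClass (-1) ∉ (descentMap : (twoTorsionModel e a b).Point →+ _).range)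
  (hneg' : squareClass (-1) ∉
    (descentMap : (twoTorsionModel e (-2 * a) (a ^ 2 - 4 * b)).Point →+ _).range)
  (hS : ∀ q ∉ S, ∀ s ∈ (descentMap : (twoTorsionModel e a b).Point →+ _).range,
    valuationParity q s = 0)
  (hS' : ∀ q ∉ S',
    ∀ s ∈ (descentMap : (twoTorsionModel e (-2 * a) (a ^ 2 - 4 * b)).Point →+ _).range,
      valuationParity q s = 0)

include hneg hneg' hS hS'

theorem addGroup_fg_of_neg_one_notMem : AddGroup.FG (twoTorsionModel e a b).Point := by
  have := finite_of_neg_one_notMem hneg hS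
  have := finite_of_neg_one_notMem hneg' hS'
  exact addGroup_fg_of_finiteIndex_range_nsmul_two finiteIndex_range_nsmul_two

theorem finrank_add_two_le_card_add_card (hb : ¬ IsSquare b) (hc : ¬ IsSquare (a ^ 2 - 4 * b)) :
    Module.finrank ℤ (twoTorsionModel e a b).Point + 2 ≤ S.card + S'.card := by
  have := finite_of_neg_one_notMem hneg hS
  have := finite_of_neg_one_notMem hneg' hS'
  have := addGroup_fg_of_neg_one_notMem hneg hneg' hS hS'
  refine (Nat.pow_le_pow_iff_right one_lt_two).mp ?_
  rw [pow_add, pow_add, mul_comm]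
  exact (four_mul_two_pow_finrank_le hb hc).trans <| Nat.mul_le_mul
    (card_le_two_pow_of_neg_one_notMem hneg hS) (card_le_two_pow_of_neg_one_notMem hneg' hS')

end twoTorsionModel
end RationalDescent

section QuadraticResidues

variable {q : ℕ} [Fact q.Prime]

theorem legendreSym_neg_three (hq : q ≠ 2) : legendreSym q (-3) = legendreSym 3 q := by
  have hodd : q % 2 = 1 := (Fact.out : q.Prime).eq_two_or_odd.resolve_left hq
  have hrec : legendreSym q 3 = (-1) ^ (q / 2) * legendreSym 3 q := by
    simpa using legendreSym.quadratic_reciprocity' (p := 3) (by decide) hq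
  rw [legendreSym.at_neg hq, ZMod.χ₄_eq_neg_one_pow hodd, hrec, ← mul_assoc, ← mul_pow,
    neg_one_mul, neg_neg, one_pow, one_mul]

theorem not_isSquare_neg_three (hq : q % 12 = 5 ∨ q % 12 = 11) :
    ¬ IsSquare ((-3 : ℤ) : ZMod q) := by
  rw [← legendreSym.eq_neg_one_iff, legendreSym_neg_three (by omega), legendreSym.mod,
    (by omega : (q : ℤ) % (3 : ℕ) = 2)]
  decide

theorem not_isSquare_three (hq : q % 12 = 5 ∨ q % 12 = 7) : ¬ IsSquare ((3 : ℤ) : ZMod q) := by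
  have hq2 : q ≠ 2 := by omega
  rw [← legendreSym.eq_neg_one_iff, ← neg_neg (3 : ℤ), legendreSym.at_neg hq2,
    legendreSym_neg_three hq2, legendreSym.mod]
  rcases hq with hq | hq
  · rw [ZMod.χ₄_nat_one_mod_four (by omega), (by omega : (q : ℤ) % (3 : ℕ) = 2)]
    decide
  · rw [ZMod.χ₄_nat_three_mod_four (by omega), (by omega : (q : ℤ) % (3 : ℕ) = 1)]
    decide

end QuadraticResidues

section Twist

theorem mwRank_eq_finrank {W : WeierstrassCurve.Affine ℚ} [AddGroup.FG W.Point] :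
    mwRank W = Module.finrank ℤ W.Point := by
  have : Module.Finite ℤ W.Point := Module.Finite.iff_addGroup_fg.mpr ‹_›
  rw [Module.finrank_eq_rank]
  exact (TensorProduct.isBaseChange ℤ W.Point ℚ).rank_eq

variable (D : ℤ)

theorem E0twist_eq_twoTorsionModel :
    E0twist D = twoTorsionModel (D : ℚ) (3 * D) (3 * D ^ 2) := by
  simp only [E0twist, twoTorsionModel]
  congr! 1 <;> ring

theorem sq_sub_four_mul_twist :
    (3 * D : ℚ) ^ 2 - 4 * (3 * D ^ 2) = (-3 : ℤ) * (D : ℚ) ^ 2 := by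
  push_cast
  ring

theorem sq_sub_four_mul_dual_twist :
    (-2 * (3 * D) : ℚ) ^ 2 - 4 * ((3 * D) ^ 2 - 4 * (3 * D ^ 2)) = 3 * (4 * D : ℚ) ^ 2 := by
  ring

variable [NeZero D]

theorem sq_sub_four_mul_twist_neg : (3 * D : ℚ) ^ 2 - 4 * (3 * D ^ 2) < 0 := by
  have hD : (D : ℚ) ≠ 0 := mod_cast NeZero.ne D
  rw [sq_sub_four_mul_twist]
  exact mul_neg_of_neg_of_pos (by norm_num) (by positivity)

instance isElliptic_twist : (twoTorsionModel (D : ℚ) (3 * D) (3 * D ^ 2)).IsElliptic := by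
  have hD : (D : ℚ) ≠ 0 := mod_cast NeZero.ne D
  exact twoTorsionModel.isElliptic_iff.mpr
    ⟨two_ne_zero, by positivity, (sq_sub_four_mul_twist_neg D).ne⟩

theorem not_isSquare_three_mul_sq : ¬ IsSquare (3 * (D : ℚ) ^ 2) := by
  have hD : (D : ℚ) ≠ 0 := mod_cast NeZero.ne D
  rintro ⟨r, hr⟩
  have hsq : IsSquare ((3 : ℕ) : ℚ) := ⟨r / D, by field_simp; push_cast; linarith⟩
  exact Nat.prime_three.prime.not_isSquare (Rat.isSquare_natCast_iff.mp hsq)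

open twoTorsionModel

theorem neg_one_notMem_range_descentMap_twist : squareClass (-1) ∉
    (descentMap : (twoTorsionModel (D : ℚ) (3 * D) (3 * D ^ 2)).Point →+ _).range :=
  neg_one_notMem_range_descentMap
    (not_isSquare_neg_descentValue_of_neg (sq_sub_four_mul_twist_neg D))

theorem neg_one_notMem_range_descentMap_dual_twist : squareClass (-1) ∉
    (descentMap : (twoTorsionModel (D : ℚ) (-2 * (3 * D))
      ((3 * D) ^ 2 - 4 * (3 * D ^ 2))).Point →+ _).range :=
  neg_one_notMem_range_descentMap
    (not_isSquare_neg_descentValue_of_mod_four_eq_three (p := 3) rfl (sq_sub_four_mul_dual_twist D))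

variable {D} {S S' : Finset Nat.Primes}

theorem prime_dvd_three_mul_of_dvd_three_mul_sq {q : Nat.Primes} {D : ℤ}
    (hq : (q : ℤ) ∣ 3 * D ^ 2) : (q : ℤ) ∣ 3 * D :=
  (Nat.prime_iff_prime_int.mp q.2).dvd_of_dvd_pow (n := 2) (hq.trans ⟨3, by ring⟩)

theorem valuationParity_eq_zero_of_mem_range_descentMap_twist
    (hS : ∀ q ∉ S, (q : ℤ) ∣ 3 * D → ¬ IsSquare ((-3 : ℤ) : ZMod q)) :
    ∀ q ∉ S, ∀ s ∈
      (descentMap : (twoTorsionModel (D : ℚ) (3 * D) (3 * D ^ 2)).Point →+ _).range,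
      valuationParity q s = 0 := fun q hq _ =>
  valuationParity_eq_zero_of_mem_range_descentMap (A := 3 * D) (B := 3 * D ^ 2)
    (by push_cast; rfl) (by push_cast; rfl) (sq_sub_four_mul_twist D)
    fun h => hS q hq (prime_dvd_three_mul_of_dvd_three_mul_sq h)

theorem valuationParity_eq_zero_of_mem_range_descentMap_dual_twist
    (hS : ∀ q ∉ S, (q : ℤ) ∣ 3 * D → ¬ IsSquare ((3 : ℤ) : ZMod q)) :
    ∀ q ∉ S, ∀ s ∈
      (descentMap : (twoTorsionModel (D : ℚ) (-2 * (3 * D))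
        ((3 * D) ^ 2 - 4 * (3 * D ^ 2))).Point →+ _).range,
      valuationParity q s = 0 := fun q hq _ =>
  valuationParity_eq_zero_of_mem_range_descentMap (A := -2 * (3 * D)) (B := -(3 * D ^ 2))
    (by push_cast; rfl) (by push_cast; ring) (sq_sub_four_mul_dual_twist D)
    fun h => hS q hq (prime_dvd_three_mul_of_dvd_three_mul_sq (dvd_neg.mp h))

theorem mwRank_E0twist_le {r : ℕ}
    (hS : ∀ q ∉ S, (q : ℤ) ∣ 3 * D → ¬ IsSquare ((-3 : ℤ) : ZMod q))
    (hS' : ∀ q ∉ S', (q : ℤ) ∣ 3 * D → ¬ IsSquare ((3 : ℤ) : ZMod q))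
    (hr : S.card + S'.card ≤ r + 2) : mwRank (E0twist D) ≤ r := by
  have hneg := neg_one_notMem_range_descentMap_twist D
  have hneg' := neg_one_notMem_range_descentMap_dual_twist D
  have hval := valuationParity_eq_zero_of_mem_range_descentMap_twist hS
  have hval' := valuationParity_eq_zero_of_mem_range_descentMap_dual_twist hS'
  have := addGroup_fg_of_neg_one_notMem hneg hneg' hval hval'
  have hrank := finrank_add_two_le_card_add_card hneg hneg' hval hval'
    (not_isSquare_three_mul_sq D) fun h => (sq_sub_four_mul_twist_neg D).not_ge h.nonneg
  rw [E0twist_eq_twoTorsionModel, mwRank_eq_finrank]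
  exact mod_cast Nat.le_of_add_le_add_right (hrank.trans hr)

end Twist

theorem mod_twelve_eq_seven_or_eq_eleven {p : ℕ} (hp : p.Prime) (h3 : p ≠ 3) (h : p % 4 = 3) :
    p % 12 = 7 ∨ p % 12 = 11 := by
  have : ¬ 3 ∣ p := fun hdvd => h3 ((Nat.prime_dvd_prime_iff_eq Nat.prime_three hp).mp hdvd).symm
  omega

theorem mod_twelve_eq_five_or_eq_of_dvd_three_mul {D : ℤ} {p₀ q : ℕ}
    (hD : ∀ p : ℕ, p.Prime → (p : ℤ) ∣ D → p ≠ 3 → p ≠ p₀ → p % 12 = 5) (hq : q.Prime)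
    (h3 : q ≠ 3) (hdvd : (q : ℤ) ∣ 3 * D) : q % 12 = 5 ∨ q = p₀ := by
  refine or_iff_not_imp_right.mpr (hD q hq ?_ h3)
  refine ((Nat.prime_iff_prime_int.mp hq).dvd_or_dvd hdvd).resolve_left fun h => h3 ?_
  exact (Nat.prime_dvd_prime_iff_eq hq Nat.prime_three).mp (mod_cast h)

theorem twist_rank_le_one_general {D : ℤ} {p₀ : ℕ} (hp₀ : p₀.Prime) (hmod : p₀ % 4 = 3)
    (hD : ∀ p : ℕ, p.Prime → (p : ℤ) ∣ D → p ≠ 3 → p ≠ p₀ → p % 12 = 5) :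
    mwRank (E0twist D) ≤ 1 := by
  have : NeZero D := ⟨by
    rintro rfl
    have := hD 2 Nat.prime_two (dvd_zero _) (by norm_num) (by rintro rfl; contradiction)
    contradiction⟩
  have (q : Nat.Primes) : Fact (q : ℕ).Prime := ⟨q.2⟩
  let S : Finset Nat.Primes := {⟨3, Nat.prime_three⟩}
  let S' : Finset Nat.Primes := {⟨3, Nat.prime_three⟩, ⟨p₀, hp₀⟩}
  have hcard : S.card + S'.card ≤ 1 + 2 := Nat.add_le_add_left Finset.card_le_two 1
  have hS {q} (hq : q ∉ S) : (q : ℕ) ≠ 3 := fun h =>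
    hq (Finset.mem_singleton.mpr (Subtype.ext h))
  have hS' {q} (hq : q ∉ S') : (q : ℕ) ≠ 3 ∧ (q : ℕ) ≠ p₀ :=
    ⟨fun h => hq (Finset.mem_insert.mpr (.inl (Subtype.ext h))),
      fun h => hq (Finset.mem_insert_of_mem (Finset.mem_singleton.mpr (Subtype.ext h)))⟩
  have hres {q} (hq : q ∉ S) (hdvd : (q : ℤ) ∣ 3 * D) : (q : ℕ) % 12 = 5 ∨ (q : ℕ) = p₀ :=
    mod_twelve_eq_five_or_eq_of_dvd_three_mul hD q.2 (hS hq) hdvd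
  have hres' {q} (hq : q ∉ S') (hdvd : (q : ℤ) ∣ 3 * D) : (q : ℕ) % 12 = 5 :=
    (mod_twelve_eq_five_or_eq_of_dvd_three_mul hD q.2 (hS' hq).1 hdvd).resolve_right (hS' hq).2
  rw [← Nat.cast_one]
  by_cases h7 : p₀ % 12 = 7
  · exact mwRank_E0twist_le (S := S') (S' := S)
      (fun q hq hdvd => not_isSquare_neg_three (.inl (hres' hq hdvd)))
      (fun q hq hdvd => not_isSquare_three ((hres hq hdvd).imp_right fun h => by rwa [h]))
      (add_comm S.card _ ▸ hcard)
  · refine mwRank_E0twist_le (S := S) (S' := S')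
      (fun q hq hdvd => not_isSquare_neg_three ((hres hq hdvd).imp_right ?_))
      (fun q hq hdvd => not_isSquare_three (.inl (hres' hq hdvd))) hcard
    rintro rfl
    exact (mod_twelve_eq_seven_or_eq_eleven q.2 (hS hq) hmod).resolve_left h7

theorem twist_rank_le_one (D : ℤ) (hD0 : D ≠ 0) (hDsf : Squarefree D)
    (hcond : (∀ p : ℕ, p.Prime → (p : ℤ) ∣ D → p % 12 = 5) ∨
      (∃ p₀ : ℕ, p₀.Prime ∧ (p₀ : ℤ) ∣ D ∧ p₀ % 4 = 3 ∧
        ∀ p : ℕ, p.Prime → (p : ℤ) ∣ D → p ≠ p₀ → p % 12 = 5)) :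
    mwRank (E0twist D) ≤ 1 := by
  rcases hcond with h | ⟨p₀, hp₀, -, hmod, h⟩
  · exact twist_rank_le_one_general Nat.prime_three rfl fun p hp hdvd _ _ => h p hp hdvd
  · exact twist_rank_le_one_general hp₀ hmod fun p hp hdvd _ => h p hp hdvd
end
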